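/- arXiv:2401.01971 — 2 statements merged into one kernel-verified Lean document; each statement's English description precedes it below -/
import Mathlib

section
/- Fix T > 0 and integers β₁, β₂ with 1 ≤ β₁ < β₂. For n ∈ ℕ let M_n be the (n+2)×(n+2) real matrix with entries (M_n)_{j,k} = I_{k−j}(T) for 1 ≤ j ≤ n+2 and 1 ≤ k ≤ n, and (M_n)_{j,n+1} = I_{n+β₁−j}(T), (M_n)_{j,n+2} = I_{n+β₂−j}(T) for 1 ≤ j ≤ n+2. Then, as n → ∞, det M_n = e^{T²/4} (T/2)^{β₁+β₂−3} (β₂−β₁)/((β₁−1)!(β₂−1)!) · (1 + O(1/n²)); that is, there exists a constant C > 0 such that |det M_n / [e^{T²/4}(T/2)^{β₁+β₂−3}(β₂−β₁)/((β₁−1)!(β₂−1)!)] − 1| ≤ C/n² for all sufficiently large n. -/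
open Matrix Real

/-- The modified Bessel function of integer order `ν`:
`I_ν(T) = (1/π) ∫_0^π e^{T cos θ} cos(νθ) dθ`. -/
noncomputable def besselI (ν : ℤ) (T : ℝ) : ℝ :=
  (1 / Real.pi) * ∫ θ in (0:ℝ)..Real.pi, Real.exp (T * Real.cos θ) * Real.cos ((ν : ℝ) * θ)

/-!
Transposing the matrix and reversing the order of its rows and columns turns the two bordering
columns into the rows `1 - q₂` and `1 - q₁`, `qᵢ = βᵢ - 1`, of the bi-infinite Toeplitz matrix with
symbol `φ(z) = e^{tz} e^{t/z}`, `t = T / 2`, put in place of the rows `0` and `1`. Since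
`φ e^{-tz} = e^{t/z}` has no positive frequencies, on columns `≥ 0` the row `1 - q` is the
combination of the rows `0, 1, 2, …` with coefficients the power series `[z^{1-q} e^{tz}]₊ e^{-tz}`.
These decay faster than any geometric sequence, so truncation to an `N × N` matrix costs only
`O(r^N)` for every `r > 0`, and the determinant is a `2 × 2` minor of coefficients times the
Toeplitz determinant `D_N(T)`, up to `O(r^N)`.

As `I_ν' = (I_{ν-1} + I_{ν+1}) / 2`, the derivative `D_N'` is the determinant with row `0` replaced
by row `-1`, and the case `q = 2` of the same argument gives `D_N' = (T / 2) D_N + O(r^N)`. With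
`D_N(0) = 1` this yields `D_N = e^{T²/4} + O(r^N)`.
-/

open Finset

/-! ### Trigonometric series and integrals -/

lemma hasSum_pow_div_factorial_mul_cos (u α ψ : ℝ) :
    HasSum (fun m : ℕ ↦ u ^ m / m.factorial * cos (α + m * ψ))
      (exp (u * cos ψ) * cos (α + u * sin ψ)) := by
  have hexp := ((NormedSpace.expSeries_div_hasSum_exp
    ((u : ℂ) * Complex.exp (ψ * Complex.I))).mul_left (Complex.exp (α * Complex.I)))
  rw [← Complex.exp_eq_exp_ℂ] at hexp
  have hterm (m : ℕ) : Complex.exp (α * Complex.I) *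
      (((u : ℂ) * Complex.exp (ψ * Complex.I)) ^ m / m.factorial) =
        ((u ^ m / m.factorial : ℝ) : ℂ) * Complex.exp ((α + m * ψ : ℝ) * Complex.I) := by
    have hangle : ((α + m * ψ : ℝ) : ℂ) * Complex.I = α * Complex.I + m * (ψ * Complex.I) := by
      push_cast
      ring
    rw [hangle, Complex.exp_add, Complex.exp_nat_mul, mul_pow]
    push_cast
    ring
  have hlimit : (Complex.exp (α * Complex.I) *
      Complex.exp (u * Complex.exp (ψ * Complex.I))).re =
        exp (u * cos ψ) * cos (α + u * sin ψ) := by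
    simp [← Complex.exp_add, Complex.exp_re, Complex.exp_im]
  simpa only [hterm, hlimit, Complex.re_ofReal_mul, Complex.exp_ofReal_mul_I_re]
    using Complex.hasSum_re hexp

lemma hasSum_pow_div_factorial_mul_integral_cos {w α ψ : ℝ → ℝ} (hw : Continuous w)
    (hα : Continuous α) (hψ : Continuous ψ) (u a b : ℝ) :
    HasSum (fun m : ℕ ↦ u ^ m / m.factorial * ∫ θ in a..b, w θ * cos (α θ + m * ψ θ))
      (∫ θ in a..b, w θ * (exp (u * cos (ψ θ)) * cos (α θ + u * sin (ψ θ)))) := by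
  have hsum := intervalIntegral.hasSum_integral_of_dominated_convergence
    (μ := MeasureTheory.volume) (a := a) (b := b)
    (F := fun (m : ℕ) θ ↦ w θ * (u ^ m / m.factorial * cos (α θ + m * ψ θ)))
    (fun m θ ↦ |w θ| * (|u| ^ m / m.factorial))
    (fun m ↦ Continuous.aestronglyMeasurable (by fun_prop))
    (fun m ↦ .of_forall fun θ _ ↦ by
      simp only [norm_mul, norm_div, norm_pow, Real.norm_eq_abs, Nat.abs_cast]
      gcongr
      exact mul_le_of_le_one_right (by positivity) (abs_cos_le_one _))
    (.of_forall fun θ _ ↦ (summable_pow_div_factorial |u|).mul_left _)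
    (by simpa only [tsum_mul_left] using Continuous.intervalIntegrable (by fun_prop) _ _)
    (.of_forall fun θ _ ↦ (hasSum_pow_div_factorial_mul_cos u (α θ) (ψ θ)).mul_left _)
  simpa only [mul_left_comm (w _), intervalIntegral.integral_const_mul] using hsum

lemma integral_cos_int_mul {k : ℤ} (hk : k ≠ 0) : ∫ θ in (0 : ℝ)..π, cos (k * θ) = 0 := by
  have hk' : (k : ℝ) ≠ 0 := mod_cast hk
  rw [intervalIntegral.integral_comp_mul_left cos hk']
  simp [sin_int_mul_pi]

/-! ### Bessel functions -/

lemma besselI_neg (ν : ℤ) (T : ℝ) : besselI (-ν) T = besselI ν T := by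
  simp [besselI]

lemma besselI_zero_right (ν : ℤ) : besselI ν 0 = if ν = 0 then 1 else 0 := by
  split_ifs with hν
  · simp [besselI, hν]
  · simp [besselI, integral_cos_int_mul hν]

lemma exp_mul_cos_le (T θ : ℝ) : exp (T * cos θ) ≤ exp |T| := by
  gcongr
  calc T * cos θ ≤ |T| * |cos θ| := (le_abs_self _).trans_eq (abs_mul _ _)
    _ ≤ |T| := mul_le_of_le_one_right (abs_nonneg _) (abs_cos_le_one _)

lemma abs_besselI_le (ν : ℤ) (T : ℝ) : |besselI ν T| ≤ exp |T| := by
  have hint : ‖∫ θ in (0 : ℝ)..π, exp (T * cos θ) * cos (ν * θ)‖ ≤ exp |T| * |π - 0| := by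
    refine intervalIntegral.norm_integral_le_of_norm_le_const fun θ _ ↦ ?_
    rw [norm_mul, norm_of_nonneg (exp_pos _).le]
    exact (mul_le_of_le_one_right (exp_pos _).le (abs_cos_le_one _)).trans (exp_mul_cos_le T θ)
  rw [Real.norm_eq_abs, sub_zero, abs_of_pos pi_pos] at hint
  rw [besselI, abs_mul, abs_of_pos (by positivity), one_div, inv_mul_le_iff₀ pi_pos]
  linarith

-- Integrate the derivative of `exp (T * cos θ) * sin (ν * θ)`, which vanishes at both endpoints.
lemma int_mul_besselI (ν : ℤ) (T : ℝ) :
    ν * besselI ν T = T / 2 * (besselI (ν - 1) T - besselI (ν + 1) T) := by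
  have hderiv (θ : ℝ) : HasDerivAt (fun θ ↦ exp (T * cos θ) * sin (ν * θ))
      (ν * (exp (T * cos θ) * cos (ν * θ)) - T / 2 *
        (exp (T * cos θ) * cos ((ν - 1 : ℤ) * θ) - exp (T * cos θ) * cos ((ν + 1 : ℤ) * θ))) θ := by
    refine ((((hasDerivAt_cos θ).const_mul T).exp).mul
      (((hasDerivAt_id θ).const_mul (ν : ℝ)).sin)).congr_deriv ?_
    push_cast
    rw [sub_mul, add_mul, one_mul, cos_sub, cos_add]
    simp only [id]
    ring
  have hint := intervalIntegral.integral_eq_sub_of_hasDerivAt (a := 0) (b := π)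
    (fun θ _ ↦ hderiv θ) (Continuous.intervalIntegrable (by fun_prop) _ _)
  rw [intervalIntegral.integral_sub, intervalIntegral.integral_const_mul,
    intervalIntegral.integral_const_mul, intervalIntegral.integral_sub] at hint
  · simp only [sin_int_mul_pi, mul_zero, sin_zero, sub_zero] at hint
    unfold besselI
    linear_combination (1 / π) * hint
  all_goals exact Continuous.intervalIntegrable (by fun_prop) _ _

lemma hasDerivAt_integral_exp_mul_cos {w : ℝ → ℝ} (hw : Continuous w) (a b T : ℝ) :
    HasDerivAt (fun T ↦ ∫ θ in a..b, exp (T * cos θ) * w θ)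
      (∫ θ in a..b, exp (T * cos θ) * cos θ * w θ) T := by
  refine (intervalIntegral.hasDerivAt_integral_of_dominated_loc_of_deriv_le
    (F' := fun T θ ↦ exp (T * cos θ) * cos θ * w θ)
    (bound := fun θ ↦ exp (|T| + 1) * |w θ|)
    (Metric.ball_mem_nhds T one_pos)
    (.of_forall fun x ↦ Continuous.aestronglyMeasurable (by fun_prop))
    (Continuous.intervalIntegrable (by fun_prop) _ _)
    (Continuous.aestronglyMeasurable (by fun_prop))
    (.of_forall fun θ _ x hx ↦ ?_)
    (Continuous.intervalIntegrable (by fun_prop) _ _)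
    (.of_forall fun θ _ x _ ↦ ?_)).2
  · have hx' : |x| ≤ |T| + 1 := by
      rw [Metric.mem_ball, Real.dist_eq] at hx
      linarith [abs_sub_abs_le_abs_sub x T]
    rw [norm_mul, norm_mul, norm_of_nonneg (exp_pos _).le]
    gcongr ?_ * _
    calc exp (x * cos θ) * |cos θ| ≤ exp (x * cos θ) :=
          mul_le_of_le_one_right (exp_pos _).le (abs_cos_le_one θ)
      _ ≤ exp |x| := exp_mul_cos_le x θ
      _ ≤ exp (|T| + 1) := by gcongr
  · simpa using (((hasDerivAt_id x).mul_const (cos θ)).exp).mul_const (w θ)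

lemma hasDerivAt_besselI (ν : ℤ) (T : ℝ) :
    HasDerivAt (besselI ν) ((besselI (ν - 1) T + besselI (ν + 1) T) / 2) T := by
  refine ((hasDerivAt_integral_exp_mul_cos (w := fun θ ↦ cos (ν * θ)) (by fun_prop)
    0 π T).const_mul (1 / π)).congr_deriv ?_
  rw [besselI, besselI, ← mul_add, ← intervalIntegral.integral_add, mul_div_assoc,
    ← intervalIntegral.integral_div]
  · congr! 3
    push_cast
    rw [sub_mul, add_mul, one_mul, cos_sub, cos_add]
    ring
  all_goals exact Continuous.intervalIntegrable (by fun_prop) _ _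

lemma abs_int_mul_besselI_le (ν : ℤ) (T : ℝ) : |ν * besselI ν T| ≤ |T| * exp |T| := by
  calc |ν * besselI ν T| = |T| / 2 * |besselI (ν - 1) T - besselI (ν + 1) T| := by
        rw [int_mul_besselI, abs_mul, abs_div, abs_two]
    _ ≤ |T| / 2 * (exp |T| + exp |T|) := by
        gcongr
        exact (abs_sub _ _).trans (add_le_add (abs_besselI_le _ _) (abs_besselI_le _ _))
    _ = |T| * exp |T| := by ring

lemma abs_int_sq_mul_besselI_le (ν : ℤ) (T : ℝ) :
    |ν ^ 2 * besselI ν T| ≤ (|T| ^ 2 + |T|) * exp |T| := by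
  have hrec : ν ^ 2 * besselI ν T = T / 2 *
      ((((ν - 1 : ℤ) * besselI (ν - 1) T) + besselI (ν - 1) T) -
        (((ν + 1 : ℤ) * besselI (ν + 1) T) - besselI (ν + 1) T)) := by
    push_cast
    linear_combination (ν : ℝ) * int_mul_besselI ν T
  calc |ν ^ 2 * besselI ν T|
      ≤ |T| / 2 * ((|T| * exp |T| + exp |T|) + (|T| * exp |T| + exp |T|)) := by
        rw [hrec, abs_mul, abs_div, abs_two]
        gcongr
        refine (abs_sub _ _).trans (add_le_add ((abs_add_le _ _).trans ?_) ((abs_sub _ _).trans ?_))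
        all_goals exact add_le_add (abs_int_mul_besselI_le _ _) (abs_besselI_le _ _)
    _ = (|T| ^ 2 + |T|) * exp |T| := by ring

lemma abs_besselI_le_div_one_add_sq (ν : ℤ) (T : ℝ) :
    |besselI ν T| ≤ (1 + |T| + |T| ^ 2) * exp |T| * (1 / (1 + (ν : ℝ) ^ 2)) := by
  have hsq := abs_int_sq_mul_besselI_le ν T
  rw [abs_mul, abs_of_nonneg (sq_nonneg _)] at hsq
  rw [mul_one_div, le_div_iff₀ (by positivity)]
  linarith [abs_besselI_le ν T]

lemma summable_one_div_one_add_int_sq : Summable fun ν : ℤ ↦ 1 / (1 + (ν : ℝ) ^ 2) := by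
  refine ((summable_one_div_int_pow.2 one_lt_two).add
    (hasSum_ite_eq (0 : ℤ) (1 : ℝ)).summable).of_nonneg_of_le (fun ν ↦ by positivity) fun ν ↦ ?_
  by_cases hν : ν = 0
  · simp [hν]
  · simp only [hν, if_false, add_zero]
    gcongr
    exact le_add_of_nonneg_left zero_le_one

lemma exists_sum_abs_besselI_le (T₀ : ℝ) :
    ∃ R ≥ 1, ∀ T, |T| ≤ T₀ → ∀ s : Finset ℤ, ∑ ν ∈ s, |besselI ν T| ≤ R := by
  refine ⟨max 1 ((1 + T₀ + T₀ ^ 2) * exp T₀ * ∑' ν : ℤ, 1 / (1 + (ν : ℝ) ^ 2)),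
    le_max_left _ _, fun T hT s ↦ le_max_of_le_right ?_⟩
  have hT₀ : 0 ≤ T₀ := (abs_nonneg T).trans hT
  calc ∑ ν ∈ s, |besselI ν T|
      ≤ ∑ ν ∈ s, (1 + T₀ + T₀ ^ 2) * exp T₀ * (1 / (1 + (ν : ℝ) ^ 2)) := by
        gcongr with ν
        exact (abs_besselI_le_div_one_add_sq ν T).trans (by gcongr)
    _ ≤ (1 + T₀ + T₀ ^ 2) * exp T₀ * ∑' ν : ℤ, 1 / (1 + (ν : ℝ) ^ 2) := by
        rw [← mul_sum]
        gcongr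
        exact summable_one_div_one_add_int_sq.sum_le_tsum s fun ν _ ↦ by positivity

-- The series is the `k`-th Fourier coefficient of `φ(z) e^{-(T/2) z} = e^{(T/2) / z}`, a symbol
-- with nonpositive frequencies only.
lemma hasSum_pow_div_factorial_mul_besselI (T : ℝ) {k : ℤ} (hk : 0 < k) :
    HasSum (fun m : ℕ ↦ (-(T / 2)) ^ m / m.factorial * besselI (k - m) T) 0 := by
  have hsum := (hasSum_pow_div_factorial_mul_integral_cos (w := fun θ ↦ exp (T * cos θ))
    (α := fun θ ↦ k * θ) (ψ := fun θ ↦ -θ) (by fun_prop) (by fun_prop) (by fun_prop)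
    (-(T / 2)) 0 π).mul_left (1 / π)
  have hanalytic := hasSum_pow_div_factorial_mul_integral_cos (w := fun _ ↦ 1)
    (α := fun θ ↦ k * θ) (ψ := fun θ ↦ θ) (by fun_prop) (by fun_prop) (by fun_prop) (T / 2) 0 π
  have hmean (m : ℕ) : ∫ θ in (0 : ℝ)..π, 1 * cos (k * θ + m * θ) = 0 := by
    simpa [add_mul] using integral_cos_int_mul (k := k + m) (by positivity)
  have hfactor (θ : ℝ) : exp (T * cos θ) *
      (exp (-(T / 2) * cos (-θ)) * cos (k * θ + -(T / 2) * sin (-θ))) =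
        1 * (exp (T / 2 * cos θ) * cos (k * θ + T / 2 * sin θ)) := by
    rw [← mul_assoc, ← exp_add, one_mul, cos_neg, sin_neg]
    congr 2 <;> ring
  simp only [hmean, mul_zero] at hanalytic
  simp only [hfactor, ← hasSum_zero.unique hanalytic, mul_zero] at hsum
  have hterm (m : ℕ) : (-(T / 2)) ^ m / m.factorial * besselI (k - m) T =
      1 / π * ((-(T / 2)) ^ m / m.factorial *
        ∫ θ in (0 : ℝ)..π, exp (T * cos θ) * cos (k * θ + m * -θ)) := by
    simp only [besselI, Int.cast_sub, Int.cast_natCast, sub_mul, mul_neg, ← sub_eq_add_neg]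
    ring
  simpa only [hterm] using hsum

/-! ### Coefficients of the bordering rows -/

open PowerSeries

lemma coeff_rescale_exp (t : ℝ) (m : ℕ) : coeff m (rescale t (exp ℝ)) = t ^ m / m.factorial := by
  simp [coeff_exp, div_eq_mul_inv]

lemma constantCoeff_rescale_exp (t : ℝ) : constantCoeff (rescale t (exp ℝ)) = 1 := by
  simp [← coeff_zero_eq_constantCoeff_apply]

/-- The power series `[z^{1-q} e^{tz}]₊ e^{-tz}`, where `[·]₊` discards the negative powers of `z`.
For `t = T / 2` its coefficients express the Bessel row shifted by `q - 1` steps in terms of the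
rows of the semi-infinite Toeplitz matrix. -/
noncomputable def borderSeries (t : ℝ) (q : ℕ) : ℝ⟦X⟧ :=
  mk (fun m ↦ coeff (q + m) (X * rescale t (exp ℝ))) * rescale (-t) (exp ℝ)

lemma borderSeries_zero (t : ℝ) : borderSeries t 0 = X := by
  have hmk : mk (fun m ↦ coeff (0 + m) (X * rescale t (exp ℝ))) = X * rescale t (exp ℝ) := by
    ext m
    simp
  rw [borderSeries, hmk, mul_assoc, exp_mul_exp_eq_exp_add]
  simp

lemma coeff_borderSeries_succ (t : ℝ) (q m : ℕ) :
    coeff m (borderSeries t (q + 1)) = coeff (m + 1) (borderSeries t q) -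
      coeff 0 (borderSeries t q) * ((-t) ^ (m + 1) / (m + 1).factorial) := by
  have hshift : borderSeries t q = X * borderSeries t (q + 1) +
      C (coeff 0 (borderSeries t q)) * rescale (-t) (exp ℝ) := by
    conv_lhs => rw [borderSeries, eq_X_mul_shift_add_const (mk _)]
    simp [borderSeries, constantCoeff_rescale_exp, add_mul, mul_assoc, add_assoc, add_comm 1]
  have := congrArg (coeff (m + 1)) hshift
  rw [map_add, coeff_succ_X_mul, coeff_C_mul, coeff_rescale_exp] at this
  linarith

lemma coeff_X_mul_rescale_exp (t : ℝ) (k : ℕ) :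
    coeff k (X * rescale t (exp ℝ)) = k * t ^ (k - 1) / k.factorial := by
  cases k with
  | zero => simp
  | succ k =>
    rw [coeff_succ_X_mul, coeff_rescale_exp, Nat.factorial_succ]
    push_cast
    field_simp

lemma coeff_zero_borderSeries (t : ℝ) (q : ℕ) :
    coeff 0 (borderSeries t q) = q * t ^ (q - 1) / q.factorial := by
  simp [borderSeries, constantCoeff_rescale_exp, ← coeff_X_mul_rescale_exp]

lemma coeff_one_borderSeries (t : ℝ) (q : ℕ) :
    coeff 1 (borderSeries t q) = t ^ q / q.factorial - t * (q * t ^ (q - 1) / q.factorial) := by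
  rw [borderSeries, coeff_one_mul, constantCoeff_rescale_exp, ← coeff_zero_eq_constantCoeff_apply,
    coeff_mk, coeff_mk, coeff_succ_X_mul, coeff_rescale_exp, coeff_rescale_exp, add_zero,
    coeff_X_mul_rescale_exp, Nat.factorial_one]
  push_cast
  ring

lemma borderSeries_minor (t : ℝ) (q₁ q₂ : ℕ) :
    coeff 0 (borderSeries t q₂) * coeff 1 (borderSeries t q₁) -
        coeff 0 (borderSeries t q₁) * coeff 1 (borderSeries t q₂) =
      t ^ (q₁ + q₂ - 1) * ((q₂ : ℝ) - q₁) / (q₁.factorial * q₂.factorial) := by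
  simp only [coeff_zero_borderSeries, coeff_one_borderSeries]
  rcases q₁ with _ | p₁ <;> rcases q₂ with _ | p₂
  · simp
  · simp only [Nat.cast_zero, zero_add, zero_mul, zero_div, mul_zero, pow_zero, Nat.factorial_zero,
      Nat.cast_one, Nat.add_sub_cancel]
    ring
  · simp only [Nat.cast_zero, add_zero, zero_mul, zero_div, mul_zero, pow_zero, Nat.factorial_zero,
      Nat.cast_one, Nat.add_sub_cancel]
    ring
  · rw [show p₁ + 1 + (p₂ + 1) - 1 = p₁ + p₂ + 1 by omega]
    simp only [Nat.add_sub_cancel]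
    field_simp
    ring

lemma hasSum_coeff_borderSeries_mul_besselI (T : ℝ) (q : ℕ) {k : ℤ} (hk : 0 ≤ k) :
    HasSum (fun m : ℕ ↦ coeff m (borderSeries (T / 2) q) * besselI (k - m) T)
      (besselI (k + q - 1) T) := by
  induction q generalizing k with
  | zero =>
    have := hasSum_single (f := fun m : ℕ ↦ coeff m (borderSeries (T / 2) 0) * besselI (k - m) T) 1
      fun m hm ↦ by simp [borderSeries_zero, coeff_X, hm]
    simpa [borderSeries_zero] using this
  | succ q ih =>
    have hk' : 0 < k + 1 := by omega
    have hrow := (hasSum_nat_add_iff' 1).2 (ih hk'.le)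
    have hnull := ((hasSum_nat_add_iff' 1).2
      (hasSum_pow_div_factorial_mul_besselI T hk')).mul_left (coeff 0 (borderSeries (T / 2) q))
    have hterm (m : ℕ) : coeff (m + 1) (borderSeries (T / 2) q) * besselI (k + 1 - (m + 1 : ℕ)) T -
        coeff 0 (borderSeries (T / 2) q) * ((-(T / 2)) ^ (m + 1) / (m + 1).factorial *
          besselI (k + 1 - (m + 1 : ℕ)) T) =
        coeff m (borderSeries (T / 2) (q + 1)) * besselI (k - m) T := by
      rw [coeff_borderSeries_succ, Nat.cast_succ, add_sub_add_right_eq_sub]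
      ring
    have hdiff := hrow.sub hnull
    simp only [hterm, sum_range_one, pow_zero, Nat.factorial_zero, Nat.cast_one, div_one, one_mul,
      zero_sub, mul_neg, sub_neg_eq_add, sub_add_cancel] at hdiff
    rwa [Nat.cast_succ, ← add_assoc, add_right_comm]

lemma abs_pow_div_factorial_le {t t₀ r : ℝ} (ht : |t| ≤ t₀) (hr : 0 < r) (m : ℕ) :
    |t ^ m / m.factorial| ≤ Real.exp (t₀ / r) * r ^ m := by
  have ht₀ : 0 ≤ t₀ := (abs_nonneg t).trans ht
  calc |t ^ m / m.factorial| = |t| ^ m / m.factorial := by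
        rw [abs_div, abs_pow, Nat.abs_cast]
    _ ≤ t₀ ^ m / m.factorial := by gcongr
    _ = (t₀ / r) ^ m / m.factorial * r ^ m := by
        rw [div_pow, div_right_comm, div_mul_cancel₀ _ (by positivity)]
    _ ≤ Real.exp (t₀ / r) * r ^ m := by
        gcongr
        exact pow_div_factorial_le_exp _ (by positivity) m

lemma exists_abs_coeff_borderSeries_le (t₀ : ℝ) {r : ℝ} (hr : 0 < r) (q : ℕ) :
    ∃ K ≥ 0, ∀ t, |t| ≤ t₀ → ∀ m, |coeff m (borderSeries t q)| ≤ K * r ^ m := by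
  induction q with
  | zero =>
    refine ⟨r⁻¹, by positivity, fun t _ m ↦ ?_⟩
    rw [borderSeries_zero, coeff_X]
    split_ifs with hm
    · simp [hm, hr.ne']
    · rw [abs_zero]
      positivity
  | succ q ih =>
    obtain ⟨K, hK, hcoeff⟩ := ih
    refine ⟨K * r + K * (Real.exp (t₀ / r) * r), by positivity, fun t ht m ↦ ?_⟩
    have hzero : |coeff 0 (borderSeries t q)| ≤ K := by simpa using hcoeff t ht 0
    calc |coeff m (borderSeries t (q + 1))|
        ≤ |coeff (m + 1) (borderSeries t q)| +
            |coeff 0 (borderSeries t q)| * |(-t) ^ (m + 1) / (m + 1).factorial| := by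
          rw [coeff_borderSeries_succ, ← abs_mul]
          exact abs_sub _ _
      _ ≤ K * r ^ (m + 1) + K * (Real.exp (t₀ / r) * r ^ (m + 1)) := by
          gcongr
          · exact hcoeff t ht _
          · exact abs_pow_div_factorial_le (by rwa [abs_neg]) hr _
      _ = (K * r + K * (Real.exp (t₀ / r) * r)) * r ^ m := by ring

lemma exists_abs_besselI_sub_sum_le (T₀ : ℝ) {r : ℝ} (hr : 0 < r) (q : ℕ) :
    ∃ K ≥ 0, ∀ T, |T| ≤ T₀ → ∀ N : ℕ, ∀ k : ℤ, 0 ≤ k →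
      |besselI (k + q - 1) T -
        ∑ m ∈ range N, coeff m (borderSeries (T / 2) q) * besselI (k - m) T| ≤ K * r ^ N := by
  set s := min r (1 / 2)
  have hs_pos : 0 < s := by positivity
  have hs_half : s ≤ 1 / 2 := min_le_right _ _
  obtain ⟨K, hK, hcoeff⟩ := exists_abs_coeff_borderSeries_le (T₀ / 2) hs_pos q
  refine ⟨K * Real.exp T₀ * (1 - s)⁻¹, ?_, fun T hT N k hk ↦ ?_⟩
  · have : 0 ≤ 1 - s := by linarith
    positivity
  have htail := (hasSum_nat_add_iff' N).2 (hasSum_coeff_borderSeries_mul_besselI T q hk)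
  have hgeom := (hasSum_geometric_of_lt_one hs_pos.le (by linarith)).mul_left
    (K * Real.exp T₀ * s ^ N)
  have hterm (m : ℕ) : ‖coeff (m + N) (borderSeries (T / 2) q) *
      besselI (k - (m + N : ℕ)) T‖ ≤ K * Real.exp T₀ * s ^ N * s ^ m := by
    have hT' : |T / 2| ≤ T₀ / 2 := by
      rw [abs_div, abs_two]
      linarith
    calc ‖coeff (m + N) (borderSeries (T / 2) q) * besselI (k - (m + N : ℕ)) T‖
        ≤ K * s ^ (m + N) * Real.exp T₀ := by
          rw [norm_mul]
          exact mul_le_mul (hcoeff _ hT' _) ((abs_besselI_le _ _).trans (exp_le_exp.2 hT))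
            (norm_nonneg _) (by positivity)
      _ = K * Real.exp T₀ * s ^ N * s ^ m := by ring
  calc _ ≤ K * Real.exp T₀ * s ^ N * (1 - s)⁻¹ := by
        rw [← htail.tsum_eq]
        exact tsum_of_norm_bounded hgeom hterm
    _ = K * Real.exp T₀ * (1 - s)⁻¹ * s ^ N := by ring
    _ ≤ K * Real.exp T₀ * (1 - s)⁻¹ * r ^ N := by
        have : 0 ≤ 1 - s := by linarith
        gcongr
        exact min_le_left _ _

/-! ### Determinants -/

section Determinant

variable {ι : Type*} [Fintype ι] [DecidableEq ι]

lemma abs_det_le_prod_sum_abs (A : Matrix ι ι ℝ) : |A.det| ≤ ∏ i, ∑ j, |A i j| := by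
  have hsign (σ : Equiv.Perm ι) : |((σ.sign : ℤ) : ℝ)| = 1 := by
    rcases Int.units_eq_one_or σ.sign with h | h <;> simp [h]
  calc |A.det| = |∑ σ : Equiv.Perm ι, ((σ.sign : ℤ) : ℝ) * ∏ i, A i (σ i)| := by
        rw [← det_transpose, det_apply']
        rfl
    _ ≤ ∑ σ : Equiv.Perm ι, ∏ i, |A i (σ i)| := by
        refine (abs_sum_le_sum_abs _ _).trans_eq (sum_congr rfl fun σ _ ↦ ?_)
        rw [abs_mul, hsign, one_mul, abs_prod]
    _ = ∑ f ∈ univ.map ⟨fun σ : Equiv.Perm ι ↦ (σ : ι → ι), DFunLike.coe_injective⟩,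
          ∏ i, |A i (f i)| := by
        rw [sum_map]
        rfl
    _ ≤ ∑ f : ι → ι, ∏ i, |A i (f i)| :=
        sum_le_sum_of_subset_of_nonneg (subset_univ _) fun f _ _ ↦ by positivity
    _ = ∏ i, ∑ j, |A i j| := by rw [prod_univ_sum, Fintype.piFinset_univ]

lemma abs_det_updateRow_le {A : Matrix ι ι ℝ} {i : ι} {v : ι → ℝ} {ε R : ℝ} (hR : 1 ≤ R)
    (hv : ∀ j, |v j| ≤ ε) (hA : ∀ k ≠ i, ∑ j, |A k j| ≤ R) :
    |(A.updateRow i v).det| ≤ Fintype.card ι * ε * R ^ Fintype.card ι := by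
  have hrow : ∑ j, |v j| ≤ Fintype.card ι * ε := by
    simpa using sum_le_card_nsmul univ (fun j ↦ |v j|) ε fun j _ ↦ hv j
  have hothers : ∏ k ∈ univ.erase i, ∑ j, |A k j| ≤ R ^ Fintype.card ι :=
    calc ∏ k ∈ univ.erase i, ∑ j, |A k j| ≤ ∏ _k ∈ univ.erase i, R :=
          prod_le_prod (fun k _ ↦ by positivity) fun k hk ↦ hA k (ne_of_mem_erase hk)
      _ = R ^ (univ.erase i).card := prod_const R
      _ ≤ R ^ Fintype.card ι := pow_le_pow_right₀ hR (card_le_univ _)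
  calc |(A.updateRow i v).det| ≤ ∏ k, ∑ j, |A.updateRow i v k j| := abs_det_le_prod_sum_abs _
    _ = (∑ j, |v j|) * ∏ k ∈ univ.erase i, ∑ j, |A k j| := by
        rw [← mul_prod_erase univ _ (mem_univ i), updateRow_self]
        congr 1
        exact prod_congr rfl fun k hk ↦ by rw [updateRow_ne (ne_of_mem_erase hk)]
    _ ≤ Fintype.card ι * ε * R ^ Fintype.card ι :=
        mul_le_mul hrow hothers (by positivity) ((by positivity : 0 ≤ ∑ j, |v j|).trans hrow)

lemma hasDerivAt_det {A : ℝ → Matrix ι ι ℝ} {A' : Matrix ι ι ℝ} {x : ℝ}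
    (hA : ∀ i j, HasDerivAt (fun t ↦ A t i j) (A' i j) x) :
    HasDerivAt (fun t ↦ (A t).det) (∑ i, ((A x).updateRow i (A' i)).det) x := by
  let detRows : ContinuousMultilinearMap ℝ (fun _ : ι ↦ ι → ℝ) ℝ :=
    ⟨(detRowAlternating (R := ℝ) (n := ι)).toMultilinearMap, continuous_id.matrix_det⟩
  have hA' : HasDerivAt A A' x := hasDerivAt_pi.2 fun i ↦ hasDerivAt_pi.2 (hA i)
  exact ((detRows.hasFDerivAt (A x)).comp_hasDerivAt x hA').congr_deriv
    (detRows.linearDeriv_apply (A x) A')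

variable {R : Type*} [CommRing R]

lemma det_updateRow_updateRow_swap (A : Matrix ι ι R) {i j : ι} (hij : i ≠ j) (x : ι → R) :
    ((A.updateRow i x).updateRow j (A i)).det = -(A.updateRow j x).det := by
  have hperm : (A.updateRow j x).submatrix (Equiv.swap i j) id =
      (A.updateRow i x).updateRow j (A i) := by
    ext k l
    rcases eq_or_ne k j with rfl | hkj
    · simp [updateRow_apply, hij]
    rcases eq_or_ne k i with rfl | hki
    · simp [updateRow_apply, hij]
    · simp [updateRow_apply, hkj, hki, Equiv.swap_apply_of_ne_of_ne]
  rw [← hperm, det_permute, Equiv.Perm.sign_swap hij]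
  simp

lemma det_updateRow_updateRow_sum (A : Matrix ι ι R) {i j : ι} (hij : i ≠ j) (x c : ι → R) :
    ((A.updateRow i x).updateRow j (∑ k, c k • A k)).det =
      c j * (A.updateRow i x).det - c i * (A.updateRow j x).det := by
  have hsum : ∑ k, c k • A k = ∑ k, Function.update c i 0 k • A.updateRow i x k + c i • A i := by
    have hterm (k : ι) : c k • A k =
        Function.update c i 0 k • A.updateRow i x k + if k = i then c i • A i else 0 := by
      rcases eq_or_ne k i with rfl | hki
      · simp
      · simp [hki]
    rw [sum_congr rfl fun k _ ↦ hterm k, sum_add_distrib, sum_ite_eq', if_pos (mem_univ i)]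
  rw [hsum, det_updateRow_add, det_updateRow_sum, det_updateRow_smul,
    det_updateRow_updateRow_swap A hij, Function.update_of_ne hij.symm, smul_eq_mul]
  ring

lemma det_updateRow_updateRow_sum_add (A : Matrix ι ι R) {i j : ι} (hij : i ≠ j)
    {x y c d u v : ι → R} (hx : x = ∑ k, c k • A k + u) (hy : y = ∑ k, d k • A k + v) :
    ((A.updateRow i x).updateRow j y).det = (c i * d j - d i * c j) * A.det +
      (d j * (A.updateRow i u).det - d i * (A.updateRow j u).det +
        ((A.updateRow i x).updateRow j v).det) := by
  have hreplace (k : ι) : (A.updateRow k x).det = c k * A.det + (A.updateRow k u).det := by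
    rw [hx, det_updateRow_add, det_updateRow_sum, smul_eq_mul]
  rw [hy, det_updateRow_add, det_updateRow_updateRow_sum A hij, hreplace, hreplace]
  ring

end Determinant

/-! ### Bordered Bessel Toeplitz determinants -/

/-- Row `s ∈ ℤ` of the bi-infinite Toeplitz matrix with symbol `e^{(T/2)(z + 1/z)}`, cut to the
columns `0, …, N - 1`. -/
noncomputable def besselRow (N : ℕ) (T : ℝ) (s : ℤ) : Fin N → ℝ := fun i ↦ besselI (i - s) T

/-- The `N × N` Toeplitz matrix with symbol `e^{(T/2)(z + 1/z)}`, given by its rows. -/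
noncomputable def besselToeplitz (N : ℕ) (T : ℝ) : Matrix (Fin N) (Fin N) ℝ :=
  of fun k ↦ besselRow N T k

lemma besselToeplitz_row (N : ℕ) (T : ℝ) (k : Fin N) :
    besselToeplitz N T k = besselRow N T k := rfl

/-- The error in expressing row `1 - q` as the combination of the rows `0, …, N - 1` of the Toeplitz
matrix whose coefficients are those of `borderSeries`. -/
noncomputable def borderRemainder (N : ℕ) (T : ℝ) (q : ℕ) : Fin N → ℝ :=
  besselRow N T (1 - q) -
    ∑ k : Fin N, coeff (k : ℕ) (borderSeries (T / 2) q) • besselToeplitz N T k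

lemma besselRow_one_sub (N : ℕ) (T : ℝ) (q : ℕ) :
    besselRow N T (1 - q) =
      ∑ k : Fin N, coeff (k : ℕ) (borderSeries (T / 2) q) • besselToeplitz N T k +
        borderRemainder N T q :=
  (add_sub_cancel _ _).symm

lemma exists_sum_abs_besselRow_le (T₀ : ℝ) :
    ∃ R ≥ 1, ∀ T, |T| ≤ T₀ → ∀ N s, ∑ i, |besselRow N T s i| ≤ R := by
  obtain ⟨R, hR, hsum⟩ := exists_sum_abs_besselI_le T₀
  refine ⟨R, hR, fun T hT N s ↦ ?_⟩
  have hinj : Function.Injective fun i : Fin N ↦ (i : ℤ) - s := fun i j hij ↦ by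
    simpa [Fin.ext_iff] using hij
  simpa [besselRow] using hsum T hT (univ.map ⟨_, hinj⟩)

lemma exists_abs_borderRemainder_le (T₀ : ℝ) {r : ℝ} (hr : 0 < r) (q : ℕ) :
    ∃ K ≥ 0, ∀ T, |T| ≤ T₀ → ∀ N i, |borderRemainder N T q i| ≤ K * r ^ N := by
  obtain ⟨K, hK, htail⟩ := exists_abs_besselI_sub_sum_le T₀ hr q
  refine ⟨K, hK, fun T hT N i ↦ ?_⟩
  convert htail T hT N i (by positivity) using 2
  simp only [borderRemainder, besselToeplitz_row, besselRow, Pi.sub_apply, Finset.sum_apply,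
    Pi.smul_apply, smul_eq_mul]
  rw [Fin.sum_univ_eq_sum_range fun m ↦ coeff m (borderSeries (T / 2) q) * besselI (i - m) T,
    sub_sub_eq_add_sub]

lemma exists_abs_det_updateRow_borderRemainder_le (T₀ : ℝ) {r : ℝ} (hr : 0 < r) (q : ℕ) :
    ∃ K ≥ 0, ∀ T, |T| ≤ T₀ → ∀ N (A : Matrix (Fin N) (Fin N) ℝ) (i : Fin N),
      (∀ k ≠ i, ∃ s, A k = besselRow N T s) →
        |(A.updateRow i (borderRemainder N T q)).det| ≤ K * r ^ N := by
  obtain ⟨R, hR, hrow⟩ := exists_sum_abs_besselRow_le T₀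
  obtain ⟨K, hK, hrem⟩ := exists_abs_borderRemainder_le T₀ (r := r / (2 * R))
    (div_pos hr (by linarith)) q
  refine ⟨K, hK, fun T hT N A i hA ↦ ?_⟩
  calc |(A.updateRow i (borderRemainder N T q)).det|
      ≤ N * (K * (r / (2 * R)) ^ N) * R ^ N := by
        simpa only [Fintype.card_fin] using abs_det_updateRow_le hR (hrem T hT N) fun k hk ↦ by
          obtain ⟨s, hs⟩ := hA k hk
          rw [hs]
          exact hrow T hT N s
    _ = K * r ^ N * (N / 2 ^ N) := by
        rw [div_pow, mul_pow]
        field_simp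
    _ ≤ K * r ^ N := by
        refine mul_le_of_le_one_right (by positivity) ((div_le_one (by positivity)).2 ?_)
        exact_mod_cast N.lt_two_pow_self.le

lemma exists_abs_det_updateRow_besselRow_sub_le (T₀ : ℝ) {r : ℝ} (hr : 0 < r) (q : ℕ) :
    ∃ K ≥ 0, ∀ T, |T| ≤ T₀ → ∀ N (i : Fin N),
      |((besselToeplitz N T).updateRow i (besselRow N T (1 - q))).det -
        coeff (i : ℕ) (borderSeries (T / 2) q) * (besselToeplitz N T).det| ≤ K * r ^ N := by
  obtain ⟨K, hK, hrem⟩ := exists_abs_det_updateRow_borderRemainder_le T₀ hr q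
  refine ⟨K, hK, fun T hT N i ↦ ?_⟩
  rw [besselRow_one_sub, det_updateRow_add, det_updateRow_sum, smul_eq_mul, add_sub_cancel_left]
  exact hrem T hT N _ i fun k _ ↦ ⟨k, rfl⟩

lemma exists_abs_det_updateRow_updateRow_besselRow_sub_le (T : ℝ) {r : ℝ} (hr : 0 < r)
    (q q' : ℕ) :
    ∃ K ≥ 0, ∀ N (i j : Fin N), i ≠ j →
      |(((besselToeplitz N T).updateRow i (besselRow N T (1 - q))).updateRow j
          (besselRow N T (1 - q'))).det -
        (coeff (i : ℕ) (borderSeries (T / 2) q) * coeff (j : ℕ) (borderSeries (T / 2) q') -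
          coeff (i : ℕ) (borderSeries (T / 2) q') * coeff (j : ℕ) (borderSeries (T / 2) q)) *
          (besselToeplitz N T).det| ≤ K * r ^ N := by
  obtain ⟨K, hK, hrem⟩ := exists_abs_det_updateRow_borderRemainder_le |T| hr q
  obtain ⟨K', hK', hrem'⟩ := exists_abs_det_updateRow_borderRemainder_le |T| hr q'
  obtain ⟨L, hL, hcoeff⟩ := exists_abs_coeff_borderSeries_le |T / 2| one_pos q'
  replace hcoeff (m : ℕ) : |coeff m (borderSeries (T / 2) q')| ≤ L := by
    simpa using hcoeff (T / 2) le_rfl m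
  refine ⟨L * K + L * K + K', by positivity, fun N i j hij ↦ ?_⟩
  have hrem_toeplitz (k : Fin N) :
      |((besselToeplitz N T).updateRow k (borderRemainder N T q)).det| ≤ K * r ^ N :=
    hrem T le_rfl N _ k fun l _ ↦ ⟨l, rfl⟩
  have hrem_bordered : |(((besselToeplitz N T).updateRow i (besselRow N T (1 - q))).updateRow j
      (borderRemainder N T q')).det| ≤ K' * r ^ N := by
    refine hrem' T le_rfl N _ j fun k _ ↦ ?_
    rcases eq_or_ne k i with rfl | hki
    · exact ⟨1 - q, updateRow_self⟩
    · exact ⟨k, updateRow_ne hki⟩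
  rw [det_updateRow_updateRow_sum_add _ hij (besselRow_one_sub N T q) (besselRow_one_sub N T q'),
    add_sub_cancel_left]
  calc _ ≤ L * (K * r ^ N) + L * (K * r ^ N) + K' * r ^ N := by
        refine (abs_add_le _ _).trans (add_le_add ((abs_sub _ _).trans ?_) hrem_bordered)
        rw [abs_mul, abs_mul]
        gcongr
        exacts [hcoeff _, hrem_toeplitz _, hcoeff _, hrem_toeplitz _]
    _ = (L * K + L * K + K') * r ^ N := by ring

lemma hasDerivAt_besselToeplitz_apply (N : ℕ) (T : ℝ) (k i : Fin N) :
    HasDerivAt (fun t ↦ besselToeplitz N t k i)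
      (((1 / 2 : ℝ) • besselRow N T (k + 1) + (1 / 2 : ℝ) • besselRow N T (k - 1)) i) T := by
  refine (hasDerivAt_besselI (i - k) T).congr_deriv ?_
  simp only [Pi.add_apply, Pi.smul_apply, smul_eq_mul, besselRow, sub_sub, sub_add]
  ring

lemma det_updateRow_castSucc_besselRow (n : ℕ) (T : ℝ) (k : Fin n) :
    ((besselToeplitz (n + 1) T).updateRow k.castSucc
      (besselRow (n + 1) T ((k.castSucc : ℕ) + 1))).det = 0 := by
  have hrow : besselRow (n + 1) T ((k.castSucc : ℕ) + 1) = besselToeplitz (n + 1) T k.succ := by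
    simp [besselToeplitz_row]
  rw [hrow]
  exact det_updateRow_eq_zero k.castSucc_lt_succ.ne'

lemma det_updateRow_succ_besselRow (n : ℕ) (T : ℝ) (k : Fin n) :
    ((besselToeplitz (n + 1) T).updateRow k.succ
      (besselRow (n + 1) T ((k.succ : ℕ) - 1))).det = 0 := by
  have hrow : besselRow (n + 1) T ((k.succ : ℕ) - 1) = besselToeplitz (n + 1) T k.castSucc := by
    simp [besselToeplitz_row]
  rw [hrow]
  exact det_updateRow_eq_zero k.castSucc_lt_succ.ne

lemma det_updateRow_last_besselRow (n : ℕ) (T : ℝ) :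
    ((besselToeplitz (n + 1) T).updateRow (Fin.last n) (besselRow (n + 1) T (n + 1))).det =
      ((besselToeplitz (n + 1) T).updateRow 0 (besselRow (n + 1) T (-1))).det := by
  rw [← det_submatrix_equiv_self Fin.revPerm ((besselToeplitz (n + 1) T).updateRow 0 _)]
  congr 1
  ext k i
  rcases eq_or_ne k (Fin.last n) with rfl | hk
  · simp only [submatrix_apply, Fin.revPerm_apply, Fin.rev_last, updateRow_self, besselRow]
    rw [← besselI_neg]
    congr 1
    rw [Fin.val_rev]
    omega
  · have hk' : k.rev ≠ 0 := by rwa [← Fin.rev_last, Fin.rev_injective.ne_iff]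
    rw [submatrix_apply, Fin.revPerm_apply, Fin.revPerm_apply, updateRow_ne hk, updateRow_ne hk',
      besselToeplitz, of_apply, of_apply, besselRow, besselRow, ← besselI_neg]
    congr 1
    rw [Fin.val_rev, Fin.val_rev]
    omega

lemma hasDerivAt_det_besselToeplitz (n : ℕ) (T : ℝ) :
    HasDerivAt (fun t ↦ (besselToeplitz (n + 1) t).det)
      ((besselToeplitz (n + 1) T).updateRow 0 (besselRow (n + 1) T (-1))).det T := by
  refine (hasDerivAt_det (hasDerivAt_besselToeplitz_apply (n + 1) T)).congr_deriv ?_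
  simp only [det_updateRow_add, det_updateRow_smul, sum_add_distrib]
  rw [Fin.sum_univ_castSucc, Fin.sum_univ_succ (n := n)]
  simp only [det_updateRow_castSucc_besselRow, det_updateRow_succ_besselRow, Fin.val_last,
    det_updateRow_last_besselRow, mul_zero, sum_const_zero, zero_add, add_zero, Fin.val_zero,
    Nat.cast_zero, zero_sub]
  ring

lemma besselToeplitz_zero (N : ℕ) : besselToeplitz N 0 = 1 := by
  ext k i
  simp [besselToeplitz, besselRow, besselI_zero_right, one_apply, sub_eq_zero, Fin.ext_iff, eq_comm]

lemma hasDerivAt_det_besselToeplitz_mul_exp (n : ℕ) (T : ℝ) :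
    HasDerivAt (fun t ↦ (besselToeplitz (n + 1) t).det * Real.exp (-(t ^ 2 / 4)))
      ((((besselToeplitz (n + 1) T).updateRow 0 (besselRow (n + 1) T (-1))).det -
        T / 2 * (besselToeplitz (n + 1) T).det) * Real.exp (-(T ^ 2 / 4))) T := by
  have hexp : HasDerivAt (fun t ↦ Real.exp (-(t ^ 2 / 4)))
      (Real.exp (-(T ^ 2 / 4)) * -((2 : ℕ) * T ^ (2 - 1) / 4)) T :=
    ((hasDerivAt_pow 2 T).div_const 4).neg.exp
  refine ((hasDerivAt_det_besselToeplitz n T).mul hexp).congr_deriv ?_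
  push_cast
  ring

lemma exists_abs_det_updateRow_zero_besselRow_sub_le (T₀ : ℝ) {r : ℝ} (hr : 0 < r) :
    ∃ K ≥ 0, ∀ T, |T| ≤ T₀ → ∀ n : ℕ,
      |((besselToeplitz (n + 1) T).updateRow 0 (besselRow (n + 1) T (-1))).det -
        T / 2 * (besselToeplitz (n + 1) T).det| ≤ K * r ^ (n + 1) := by
  obtain ⟨K, hK, hborder⟩ := exists_abs_det_updateRow_besselRow_sub_le T₀ hr 2
  refine ⟨K, hK, fun T hT n ↦ ?_⟩
  have hcoeff : coeff 0 (borderSeries (T / 2) 2) = T / 2 := by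
    rw [coeff_zero_borderSeries]
    norm_num
  simpa only [Fin.val_zero, hcoeff, Nat.cast_ofNat, Int.reduceSub] using hborder T hT (n + 1) 0

-- The derivative is exponentially small and the value at `0` is `1`.
lemma exists_abs_det_besselToeplitz_mul_exp_sub_one_le (T : ℝ) {r : ℝ} (hr : 0 < r) :
    ∃ K ≥ 0, ∀ n : ℕ,
      |(besselToeplitz (n + 1) T).det * Real.exp (-(T ^ 2 / 4)) - 1| ≤ K * r ^ (n + 1) := by
  obtain ⟨K, hK, hborder⟩ := exists_abs_det_updateRow_zero_besselRow_sub_le |T| hr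
  refine ⟨K * |T|, by positivity, fun n ↦ ?_⟩
  have hderiv_le (t : ℝ) (ht : t ∈ Metric.closedBall (0 : ℝ) |T|) :
      ‖(((besselToeplitz (n + 1) t).updateRow 0 (besselRow (n + 1) t (-1))).det -
        t / 2 * (besselToeplitz (n + 1) t).det) * Real.exp (-(t ^ 2 / 4))‖ ≤ K * r ^ (n + 1) := by
    have hexp_le : Real.exp (-(t ^ 2 / 4)) ≤ 1 := exp_le_one_iff.2 (by linarith [sq_nonneg t])
    rw [norm_mul, norm_eq_abs, norm_eq_abs, abs_exp]
    exact (mul_le_of_le_one_right (abs_nonneg _) hexp_le).trans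
      (hborder t (by simpa using ht) n)
  have hmvt := (convex_closedBall (0 : ℝ) |T|).norm_image_sub_le_of_norm_hasDerivWithin_le
    (fun t _ ↦ (hasDerivAt_det_besselToeplitz_mul_exp n t).hasDerivWithinAt) hderiv_le
    (Metric.mem_closedBall_self (abs_nonneg T)) (y := T) (by simp)
  simpa [besselToeplitz_zero, mul_right_comm] using hmvt

lemma exists_abs_det_besselToeplitz_sub_exp_le (T : ℝ) {r : ℝ} (hr : 0 < r) :
    ∃ K ≥ 0, ∀ n : ℕ,
      |(besselToeplitz (n + 1) T).det - Real.exp (T ^ 2 / 4)| ≤ K * r ^ (n + 1) := by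
  obtain ⟨K, hK, hdet⟩ := exists_abs_det_besselToeplitz_mul_exp_sub_one_le T hr
  refine ⟨Real.exp (T ^ 2 / 4) * K, by positivity, fun n ↦ ?_⟩
  have hfactor : (besselToeplitz (n + 1) T).det - Real.exp (T ^ 2 / 4) = Real.exp (T ^ 2 / 4) *
      ((besselToeplitz (n + 1) T).det * Real.exp (-(T ^ 2 / 4)) - 1) := by
    rw [Real.exp_neg]
    field_simp
  rw [hfactor, abs_mul, abs_exp, mul_assoc]
  gcongr
  exact hdet n

/-- The matrix `M_n` of the theorem, with rows and columns numbered from `0`. -/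
noncomputable def borderedBesselToeplitz (n : ℕ) (T : ℝ) (β₁ β₂ : ℤ) :
    Matrix (Fin (n + 2)) (Fin (n + 2)) ℝ :=
  of fun j k ↦
    if (k : ℕ) < n then besselI (k - j) T
    else if (k : ℕ) = n then besselI (n + β₁ - j - 1) T
    else besselI (n + β₂ - j - 1) T

lemma det_borderedBesselToeplitz (n : ℕ) (T : ℝ) (β₁ β₂ : ℤ) :
    (borderedBesselToeplitz n T β₁ β₂).det =
      (((besselToeplitz (n + 2) T).updateRow 0 (besselRow (n + 2) T (2 - β₂))).updateRow 1
        (besselRow (n + 2) T (2 - β₁))).det := by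
  rw [← det_transpose, ← det_submatrix_equiv_self Fin.revPerm]
  congr 1
  ext k i
  simp only [borderedBesselToeplitz, submatrix_apply, Fin.revPerm_apply, transpose_apply, of_apply,
    updateRow_apply, besselToeplitz_row, besselRow, Fin.val_rev, Fin.ext_iff, Fin.val_zero,
    Fin.val_one]
  split_ifs <;> first | omega | (congr 1; omega)

lemma exists_abs_det_borderedBesselToeplitz_sub_le (T : ℝ) {r : ℝ} (hr : 0 < r) (q₁ q₂ : ℕ) :
    ∃ K ≥ 0, ∀ n : ℕ,
      |(borderedBesselToeplitz n T (q₁ + 1) (q₂ + 1)).det -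
        Real.exp (T ^ 2 / 4) * ((T / 2) ^ (q₁ + q₂ - 1) * ((q₂ : ℝ) - q₁) /
          (q₁.factorial * q₂.factorial))| ≤ K * r ^ n := by
  obtain ⟨K, hK, hborder⟩ := exists_abs_det_updateRow_updateRow_besselRow_sub_le T hr q₂ q₁
  obtain ⟨L, hL, hszego⟩ := exists_abs_det_besselToeplitz_sub_exp_le T hr
  rw [← borderSeries_minor]
  set κ := coeff 0 (borderSeries (T / 2) q₂) * coeff 1 (borderSeries (T / 2) q₁) -
    coeff 0 (borderSeries (T / 2) q₁) * coeff 1 (borderSeries (T / 2) q₂)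
  refine ⟨(K + |κ| * L) * r ^ 2, by positivity, fun n ↦ ?_⟩
  have hreduce : |(borderedBesselToeplitz n T (q₁ + 1) (q₂ + 1)).det -
      κ * (besselToeplitz (n + 2) T).det| ≤ K * r ^ (n + 2) := by
    have hshift (q : ℕ) : (2 : ℤ) - (q + 1) = 1 - q := by ring
    rw [det_borderedBesselToeplitz, hshift, hshift]
    exact hborder (n + 2) 0 1 zero_ne_one
  calc |(borderedBesselToeplitz n T (q₁ + 1) (q₂ + 1)).det - Real.exp (T ^ 2 / 4) * κ|
      = |((borderedBesselToeplitz n T (q₁ + 1) (q₂ + 1)).det - κ * (besselToeplitz (n + 2) T).det) +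
          κ * ((besselToeplitz (n + 2) T).det - Real.exp (T ^ 2 / 4))| := by ring_nf
    _ ≤ K * r ^ (n + 2) + |κ| * (L * r ^ (n + 2)) := by
        refine (abs_add_le _ _).trans (add_le_add hreduce ?_)
        rw [abs_mul]
        gcongr
        exact hszego (n + 1)
    _ = (K + |κ| * L) * r ^ 2 * r ^ n := by ring

theorem two_bordered_bessel_toeplitz_asymptotics_general {T : ℝ} (hT : T ≠ 0) {β₁ β₂ : ℕ}
    (hβ₁ : 1 ≤ β₁) (hβ₂ : 1 ≤ β₂) (hβ : β₁ ≠ β₂) {r : ℝ} (hr : 0 < r) :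
    ∃ C > 0, ∀ n : ℕ, |(borderedBesselToeplitz n T β₁ β₂).det /
      (Real.exp (T ^ 2 / 4) * (T / 2) ^ (β₁ + β₂ - 3) * ((β₂ : ℝ) - β₁) /
        ((β₁ - 1).factorial * (β₂ - 1).factorial)) - 1| ≤ C * r ^ n := by
  obtain ⟨q₁, rfl⟩ := Nat.exists_eq_add_of_le' hβ₁
  obtain ⟨q₂, rfl⟩ := Nat.exists_eq_add_of_le' hβ₂
  obtain ⟨K, hK, hdet⟩ := exists_abs_det_borderedBesselToeplitz_sub_le T hr q₁ q₂
  set limit := Real.exp (T ^ 2 / 4) * ((T / 2) ^ (q₁ + q₂ - 1) * ((q₂ : ℝ) - q₁) /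
    (q₁.factorial * q₂.factorial))
  have hlimit : Real.exp (T ^ 2 / 4) * (T / 2) ^ (q₁ + 1 + (q₂ + 1) - 3) *
      (((q₂ + 1 : ℕ) : ℝ) - (q₁ + 1 : ℕ)) /
        ((q₁ + 1 - 1).factorial * (q₂ + 1 - 1).factorial) = limit := by
    rw [show q₁ + 1 + (q₂ + 1) - 3 = q₁ + q₂ - 1 by omega, Nat.add_sub_cancel, Nat.add_sub_cancel]
    push_cast
    ring
  have hlimit_ne : limit ≠ 0 := by
    have hq : (q₂ : ℝ) - q₁ ≠ 0 := sub_ne_zero.2 (by exact_mod_cast fun h ↦ hβ (by rw [h]))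
    positivity
  refine ⟨(K + 1) / |limit|, by positivity, fun n ↦ ?_⟩
  rw [hlimit, div_sub_one hlimit_ne, abs_div, div_mul_eq_mul_div]
  gcongr
  push_cast
  exact (hdet n).trans (by gcongr; linarith)

lemma one_div_four_pow_le_one_div_sq {n : ℕ} (hn : n ≠ 0) :
    (1 / 4 : ℝ) ^ n ≤ 1 / (n : ℝ) ^ 2 := by
  have hlt : (n : ℝ) < 2 ^ n := by exact_mod_cast n.lt_two_pow_self
  calc (1 / 4 : ℝ) ^ n = 1 / (2 ^ n) ^ 2 := by
        rw [_root_.one_div_pow, pow_right_comm]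
        norm_num
    _ ≤ 1 / (n : ℝ) ^ 2 := by gcongr

/-- Theorem 1.6: asymptotics of the two-bordered Toeplitz determinant of modified Bessel
functions describing the non-intersection probability of `n+2` continuous time random walks
whose top two ending points are gapped by `β₁ < β₂`. -/
theorem two_bordered_bessel_toeplitz_asymptotics
    (T : ℝ) (hT : 0 < T) (β₁ β₂ : ℕ) (hβ₁ : 1 ≤ β₁) (hβ : β₁ < β₂) :
    ∃ C > (0:ℝ), ∃ N : ℕ, ∀ n : ℕ, N ≤ n →
      |Matrix.det (Matrix.of fun j k : Fin (n + 2) =>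
          if (k : ℕ) < n then besselI ((k : ℤ) - (j : ℤ)) T
          else if (k : ℕ) = n then besselI ((n : ℤ) + (β₁ : ℤ) - (j : ℤ) - 1) T
          else besselI ((n : ℤ) + (β₂ : ℤ) - (j : ℤ) - 1) T) /
        (Real.exp (T ^ 2 / 4) * (T / 2) ^ (β₁ + β₂ - 3) * ((β₂ - β₁ : ℕ) : ℝ) /
          ((Nat.factorial (β₁ - 1) : ℝ) * (Nat.factorial (β₂ - 1) : ℝ))) - 1|
        ≤ C / (n : ℝ) ^ 2 := by
  obtain ⟨C, hC, hdet⟩ := two_bordered_bessel_toeplitz_asymptotics_general hT.ne' hβ₁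
    (hβ₁.trans hβ.le) hβ.ne (r := 1 / 4) (by norm_num)
  refine ⟨C, hC, 1, fun n hn ↦ ?_⟩
  rw [Nat.cast_sub hβ.le, ← mul_one_div C]
  exact (hdet n).trans (by gcongr; exact one_div_four_pow_le_one_div_sq (by omega))
end

section
/- Fix T > 0. Then, as n → ∞, the n×n Toeplitz determinant det( I_{j−k}(T) )_{j,k=1}^{n} = e^{T²/4} (1 + O(e^{−cn})), where c may be taken to be any positive constant; that is, for every c > 0 there exists C > 0 such that |det( I_{j−k}(T) )_{j,k=1}^{n} − e^{T²/4}| ≤ C e^{−cn} for all n. -/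
open Matrix Real

/-!
Put `x = T / 2`. On the unit circle the symbol factors as `e^{xz} * e^{x/z}`, so by Parseval the
entry `I_{i-j}(T)` is the inner product of the Taylor coefficients of `z^i e^{xz}` and `z^j e^{xz}`.
By Cauchy–Binet the Toeplitz determinant is then a sum of squares of minors, and each minor is a
power of `x` times a Frobenius determinant `det (1 / (s_l - i)!)`. Hence (Gessel) the determinant is
`∑ N, p N * (x ^ 2) ^ N`, where `p N` is the sum of `(f^λ / N!) ^ 2` over the partitions `λ` of `N`
with at most `n` parts.

Removing a box from `λ` in all ways multiplies the Frobenius determinant by `N`; adding a box in all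
ways multiplies it by `1 - ∏ l, s_l / (s_l + 1)`, the defect accounting for the forbidden box in row
`n + 1`. Double counting gives `(N + 1) * p (N + 1) ≤ p N`, with equality for `N < n`. So
`0 ≤ p N ≤ 1 / N!`, with equality on the right for `N ≤ n`, and the determinant differs from
`e^{x²}` by at most a tail of its Taylor series, which decays superexponentially in `n`.
-/

open Filter Polynomial Topology
open scoped Nat

namespace BesselToeplitz

section Determinants

variable {ι κ R : Type*} [Fintype ι] [DecidableEq ι] [CommRing R]

theorem sum_det_updateRow_eq_sum_det_updateCol (A C : Matrix ι ι R) :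
    ∑ l, (A.updateRow l (C l)).det = ∑ i, (A.updateCol i (fun l ↦ C l i)).det := by
  have expand_row (l : ι) : (A.updateRow l (C l)).det = ∑ i, C l i * A.adjugate i l := by
    rw [← cramer_transpose_apply, cramer_eq_adjugate_mulVec, ← adjugate_transpose]
    simp [mulVec, dotProduct, mul_comm]
  have expand_col (i : ι) : (A.updateCol i fun l ↦ C l i).det = ∑ l, C l i * A.adjugate i l := by
    rw [← cramer_apply, cramer_eq_adjugate_mulVec]
    simp [mulVec, dotProduct, mul_comm]
  simp_rw [expand_row, expand_col]
  exact Finset.sum_comm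

theorem sum_det_updateRow_sub_mul (A : Matrix ι ι R) (u v : ι → R) :
    ∑ l, (A.updateRow l fun i ↦ (u l - v i) * A l i).det = (∑ l, u l - ∑ i, v i) * A.det := by
  have split_row (l : ι) : (A.updateRow l fun i ↦ (u l - v i) * A l i).det =
      u l * A.det - (A.updateRow l fun i ↦ v i * A l i).det := by
    have row_eq : (fun i ↦ (u l - v i) * A l i) = u l • A l + (-1 : R) • fun i ↦ v i * A l i := by
      ext i
      simp only [Pi.add_apply, Pi.smul_apply, smul_eq_mul]
      ring
    rw [row_eq, det_updateRow_add, det_updateRow_smul, det_updateRow_smul, updateRow_eq_self]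
    ring
  have scale_col (i : ι) : (A.updateCol i fun l ↦ v i * A l i).det = v i * A.det := by
    have h := det_updateCol_smul A i (v i) (fun l ↦ A l i)
    rwa [updateCol_eq_self] at h
  simp_rw [split_row, Finset.sum_sub_distrib,
    sum_det_updateRow_eq_sum_det_updateCol A (fun l i ↦ v i * A l i), scale_col, ← Finset.sum_mul,
    sub_mul]

theorem det_sum_mul_eq_sum_prod_mul_det (a b : ι → κ → R) (t : Finset κ) :
    (of fun i j ↦ ∑ k ∈ t, a i k * b j k).det =
      ∑ s ∈ Fintype.piFinset fun _ : ι ↦ t, (∏ l, a l (s l)) * (of fun l i ↦ b i (s l)).det := by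
  have multilinear := (detRowAlternating (R := R) (n := ι)).toMultilinearMap.map_sum_finset
    (fun i k j ↦ a i k * b j k) (fun _ ↦ t)
  have rows : (of fun i j ↦ ∑ k ∈ t, a i k * b j k) = fun i ↦ ∑ k ∈ t, fun j ↦ a i k * b j k := by
    ext i j
    simp
  rw [rows]
  refine multilinear.trans (Finset.sum_congr rfl fun s _ ↦ ?_)
  rw [← det_mul_column]
  rfl

/-- The Cauchy–Binet formula, summed over all tuples of indices instead of over subsets. -/
theorem factorial_card_mul_det_sum_mul (a b : ι → κ → R) (t : Finset κ) :
    ((Fintype.card ι)! : R) * (of fun i j ↦ ∑ k ∈ t, a i k * b j k).det =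
      ∑ s ∈ Fintype.piFinset fun _ : ι ↦ t,
        (of fun l i ↦ a i (s l)).det * (of fun l i ↦ b i (s l)).det := by
  have permuted (σ : Equiv.Perm ι) : (of fun i j ↦ ∑ k ∈ t, a i k * b j k).det =
      ∑ s ∈ Fintype.piFinset fun _ : ι ↦ t,
        (σ.sign : R) * (∏ l, a l (s (σ l))) * (of fun l i ↦ b i (s l)).det := by
    rw [det_sum_mul_eq_sum_prod_mul_det]
    refine (Finset.sum_equiv (Equiv.arrowCongr σ.symm (Equiv.refl κ)) (fun s ↦ ?_)
      fun s _ ↦ ?_).symm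
    · simpa [Fintype.mem_piFinset] using σ.forall_congr_right.symm
    · have h := det_permute σ (of fun l i ↦ b i (s l))
      rw [mul_right_comm, ← h, mul_comm]
      rfl
  calc ((Fintype.card ι)! : R) * (of fun i j ↦ ∑ k ∈ t, a i k * b j k).det
      = ∑ _σ : Equiv.Perm ι, (of fun i j ↦ ∑ k ∈ t, a i k * b j k).det := by
        rw [Finset.sum_const, Finset.card_univ, Fintype.card_perm, nsmul_eq_mul]
    _ = _ := by
        rw [Finset.sum_congr rfl fun σ _ ↦ permuted σ, Finset.sum_comm]
        refine Finset.sum_congr rfl fun s _ ↦ ?_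
        rw [← Finset.sum_mul, det_apply' (of fun l i ↦ a i (s l))]
        rfl

theorem prod_mul_det_vandermonde [IsDomain R] {n : ℕ} (v : Fin (n + 1) → R) :
    (∏ l, v l) * (vandermonde v).det =
      (of fun l ↦ Fin.cons (v l) fun i : Fin n ↦
        (v l + 1) * (descPochhammer R (i + 1)).eval (v l)).det := by
  -- `p (i + 1) = (X + 1) (X - 1) ⋯ (X - i)`, so `X * p (i + 1)` is `X + 1` times a falling
  -- factorial.
  let p : Fin (n + 1) → R[X] :=
    Fin.cons 1 fun i : Fin n ↦ (X + C 1) * (descPochhammer R i).comp (X - C 1)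
  have monic_comp (i : ℕ) : ((descPochhammer R i).comp (X - C 1)).Monic :=
    (monic_descPochhammer R i).comp_X_sub_C 1
  have p_monic (i : Fin (n + 1)) : (p i).Monic :=
    Fin.cases monic_one (fun i ↦ (monic_X_add_C 1).mul (monic_comp i)) i
  have p_natDegree (i : Fin (n + 1)) : (p i).natDegree = i := by
    refine Fin.cases natDegree_one (fun i ↦ ?_) i
    have natDegree_comp_X_sub : ((descPochhammer R i).comp (X - C 1)).natDegree = i := by
      rw [natDegree_comp, descPochhammer_natDegree, natDegree_X_sub_C, mul_one]
    simp only [p, Fin.cons_succ, Fin.val_succ]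
    rw [(monic_X_add_C 1).natDegree_mul (monic_comp i), natDegree_X_add_C, natDegree_comp_X_sub,
      add_comm]
  rw [det_eval_matrixOfPolynomials_eq_det_vandermonde v p p_natDegree p_monic, ← det_mul_column]
  congr 1
  ext l i
  refine Fin.cases ?_ (fun i ↦ ?_) i
  · simp [p]
  · simp only [of_apply, p, Fin.cons_succ, descPochhammer_succ_left, eval_mul, eval_comp, eval_add,
      eval_sub, eval_X, eval_C, eval_one]
    ring

end Determinants

section Summation

theorem hasSum_of_tendsto_sum_of_nonneg {α β : Type*} [Preorder β] [IsDirectedOrder β]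
    [Nonempty β] {F : α → ℝ} (hF : ∀ s, 0 ≤ F s) {S : β → Finset α} (hS : Tendsto S atTop atTop)
    (hmono : Monotone S) {d : ℝ} (h : Tendsto (fun t ↦ ∑ s ∈ S t, F s) atTop (𝓝 d)) :
    HasSum F d := by
  have sum_le (u : Finset α) : ∑ s ∈ u, F s ≤ d := by
    obtain ⟨t, ht⟩ := (hS.eventually (eventually_ge_atTop u)).exists
    refine (Finset.sum_le_sum_of_subset_of_nonneg ht fun s _ _ ↦ hF s).trans ?_
    exact Monotone.ge_of_tendsto
      (fun t t' htt' ↦ Finset.sum_le_sum_of_subset_of_nonneg (hmono htt') fun s _ _ ↦ hF s) h t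
  have summable_F : Summable F := summable_of_sum_le hF sum_le
  exact tendsto_nhds_unique h (summable_F.hasSum.comp hS) ▸ summable_F.hasSum

theorem hasSum_det_sq {ι κ : Type*} [Fintype ι] [DecidableEq ι] {a : ι → κ → ℝ} {M : Matrix ι ι ℝ}
    (hM : ∀ i j, HasSum (fun k ↦ a i k * a j k) (M i j)) :
    HasSum (fun s : ι → κ ↦ (of fun l i ↦ a i (s l)).det ^ 2) ((Fintype.card ι)! * M.det) := by
  classical
  have mono : Monotone fun t : Finset κ ↦ Fintype.piFinset fun _ : ι ↦ t :=
    fun t t' h ↦ Fintype.piFinset_subset _ _ fun _ ↦ h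
  refine hasSum_of_tendsto_sum_of_nonneg (fun _ ↦ sq_nonneg _)
    (tendsto_atTop_finset_of_monotone mono fun s ↦ ⟨Finset.univ.image s, ?_⟩) mono ?_
  · simp [Fintype.mem_piFinset]
  · simp_rw [pow_two, ← factorial_card_mul_det_sum_mul]
    refine Tendsto.const_mul _ ((continuous_id.matrix_det.tendsto M).comp ?_)
    exact tendsto_pi_nhds.2 fun i ↦ tendsto_pi_nhds.2 fun j ↦ hM i j

theorem hasSum_sum_piAntidiag {ι E : Type*} [Fintype ι] [DecidableEq ι] [AddCommGroup E]
    [UniformSpace E] [IsUniformAddGroup E] [CompleteSpace E] [T2Space E] {F : (ι → ℕ) → E} {d : E}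
    (h : HasSum F d) : HasSum (fun M ↦ ∑ s ∈ Finset.univ.piAntidiag M, F s) d := by
  have fiber (M : ℕ) : (fun s : ι → ℕ ↦ ∑ l, s l) ⁻¹' {M} =
      ((Finset.univ.piAntidiag M : Finset (ι → ℕ)) : Set (ι → ℕ)) := by
    ext s
    simp
  have tsum_fiber (M : ℕ) : ∑' s : (fun s : ι → ℕ ↦ ∑ l, s l) ⁻¹' {M}, F s =
      ∑ s ∈ Finset.univ.piAntidiag M, F s := by
    rw [fiber, Finset.tsum_subtype']
  simpa only [tsum_fiber] using h.tsum_fiberwise fun s ↦ ∑ l, s l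

theorem sum_piAntidiag_succ_filter {ι A : Type*} [Fintype ι] [DecidableEq ι] [AddCommMonoid A]
    (F : (ι → ℕ) → A) (l : ι) (M : ℕ) :
    ∑ s ∈ Finset.univ.piAntidiag (M + 1) with s l ≠ 0, F s =
      ∑ s ∈ Finset.univ.piAntidiag M, F (s + Pi.single l 1) := by
  have sub_add {s : ι → ℕ} (hs : s l ≠ 0) : s - Pi.single l 1 + Pi.single l 1 = s := by
    refine tsub_add_cancel_of_le fun m ↦ ?_
    rcases eq_or_ne m l with rfl | hm
    · simpa [Nat.one_le_iff_ne_zero] using hs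
    · simp [hm]
  refine Finset.sum_nbij' (· - Pi.single l 1) (· + Pi.single l 1) ?_ ?_ ?_ ?_ ?_
  · intro s hs
    simp only [Finset.mem_filter, Finset.mem_piAntidiag] at hs ⊢
    have sum_eq : ∑ m, (s - Pi.single l 1 + Pi.single l 1 : ι → ℕ) m = M + 1 := by
      rw [sub_add hs.2, hs.1.1]
    simp only [Pi.add_apply, Finset.sum_add_distrib, Finset.sum_pi_single', Finset.mem_univ,
      if_true] at sum_eq
    exact ⟨Nat.succ_injective sum_eq, by simp⟩
  · intro s hs
    simp only [Finset.mem_filter, Finset.mem_piAntidiag] at hs ⊢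
    simp [Finset.sum_add_distrib, hs.1]
  · exact fun s hs ↦ sub_add (Finset.mem_filter.1 hs).2
  · exact fun s _ ↦ add_tsub_cancel_right s _
  · exact fun s hs ↦ by rw [sub_add (Finset.mem_filter.1 hs).2]

theorem abs_sub_exp_le_of_hasSum {u : ℕ → ℝ} {n : ℕ} {y c d : ℝ} (hu : ∀ N, 0 ≤ u N)
    (hu_le : ∀ N, u N ≤ (N ! : ℝ)⁻¹) (hu_eq : ∀ N ≤ n, u N = (N ! : ℝ)⁻¹) (hy : 0 ≤ y) (hc : 0 ≤ c)
    (h : HasSum (fun N ↦ u N * y ^ N) d) :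
    |d - Real.exp y| ≤ Real.exp (y * Real.exp c) * Real.exp (-c * n) := by
  have hasSum_exp (z : ℝ) : HasSum (fun N : ℕ ↦ (N ! : ℝ)⁻¹ * z ^ N) (Real.exp z) := by
    simpa [Real.exp_eq_exp_ℝ, div_eq_inv_mul] using NormedSpace.expSeries_div_hasSum_exp z
  have hasSum_diff := (hasSum_exp y).sub h
  have diff_nonneg (N : ℕ) : 0 ≤ (N ! : ℝ)⁻¹ * y ^ N - u N * y ^ N :=
    sub_nonneg.2 (mul_le_mul_of_nonneg_right (hu_le N) (by positivity))
  rw [abs_sub_comm, abs_of_nonneg (hasSum_diff.nonneg diff_nonneg)]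
  refine hasSum_le (fun N ↦ ?_) hasSum_diff
    ((hasSum_exp (y * Real.exp c)).mul_right (Real.exp (-c * n)))
  rcases le_or_gt N n with hN | hN
  · rw [hu_eq N hN, sub_self]
    positivity
  · have one_le : 1 ≤ Real.exp c ^ N * Real.exp (-c * n) := by
      rw [← Real.exp_nat_mul, ← Real.exp_add, Real.one_le_exp_iff]
      nlinarith [(Nat.cast_le (α := ℝ)).2 hN.le]
    calc (N ! : ℝ)⁻¹ * y ^ N - u N * y ^ N
        ≤ (N ! : ℝ)⁻¹ * y ^ N * 1 := by
          linarith [mul_nonneg (hu N) (pow_nonneg hy N)]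
      _ ≤ (N ! : ℝ)⁻¹ * y ^ N * (Real.exp c ^ N * Real.exp (-c * n)) := by gcongr
      _ = (N ! : ℝ)⁻¹ * (y * Real.exp c) ^ N * Real.exp (-c * n) := by ring

end Summation

section Frobenius

/-- The reciprocal factorial `1 / (k - i)!`, read as `0` when `k < i`. -/
noncomputable def invFactorialSub (k i : ℕ) : ℝ :=
  if i ≤ k then ((k - i)! : ℝ)⁻¹ else 0

theorem invFactorialSub_of_lt {k i : ℕ} (h : k < i) : invFactorialSub k i = 0 :=
  if_neg h.not_ge

theorem invFactorialSub_succ_succ (k i : ℕ) :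
    invFactorialSub (k + 1) (i + 1) = invFactorialSub k i := by
  simp [invFactorialSub]

theorem sub_mul_invFactorialSub_succ (k i : ℕ) :
    (((k + 1 : ℕ) : ℝ) - i) * invFactorialSub (k + 1) i = invFactorialSub k i := by
  rcases lt_trichotomy i (k + 1) with h | rfl | h
  · obtain ⟨m, rfl⟩ := Nat.exists_eq_add_of_le (Nat.le_of_lt_succ h)
    have sub_eq : i + m + 1 - i = m + 1 := by omega
    simp only [invFactorialSub, h.le, Nat.le_of_lt_succ h, if_true, sub_eq, Nat.add_sub_cancel_left,
      Nat.factorial_succ]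
    push_cast
    field_simp
    ring
  · simp [invFactorialSub_of_lt]
  · simp [invFactorialSub_of_lt, h, (Nat.lt_succ_self k).trans h]

theorem factorial_mul_invFactorialSub (k i : ℕ) :
    (k ! : ℝ) * invFactorialSub k i = (descPochhammer ℝ i).eval (k : ℝ) := by
  rw [descPochhammer_eval_eq_descFactorial]
  rcases le_or_gt i k with h | h
  · rw [invFactorialSub, if_pos h, ← Nat.factorial_mul_descFactorial h, Nat.cast_mul]
    field_simp
  · rw [invFactorialSub_of_lt h, Nat.descFactorial_eq_zero_iff_lt.2 h, mul_zero, Nat.cast_zero]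

variable {n : ℕ}

/-- The matrix `(1 / (s_l - i)!)` in Frobenius' formula for the number of standard Young
tableaux. -/
noncomputable def frobeniusMatrix (s : Fin n → ℕ) : Matrix (Fin n) (Fin n) ℝ :=
  of fun l i ↦ invFactorialSub (s l) i

/-- The Frobenius determinant `det (1 / (s_l - i)!)`. If `s` enumerates the numbers
`λ_i + n - 1 - i` for a partition `λ` of `N` into at most `n` parts, it is `± f^λ / N!`, where `f^λ`
counts the standard Young tableaux of shape `λ`. -/
noncomputable def frobeniusDet (s : Fin n → ℕ) : ℝ :=
  (frobeniusMatrix s).det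

theorem frobeniusMatrix_eq_updateRow {s t : Fin n → ℕ} {l : Fin n} (h : ∀ m ≠ l, t m = s m) :
    frobeniusMatrix t = (frobeniusMatrix s).updateRow l fun i ↦ invFactorialSub (t l) i := by
  ext m i
  rcases eq_or_ne m l with rfl | hm
  · simp [frobeniusMatrix]
  · simp [frobeniusMatrix, hm, h m hm]

theorem sum_fin_val_eq_choose_two (n : ℕ) : ∑ i : Fin n, (i : ℕ) = n.choose 2 := by
  rw [Fin.sum_univ_eq_sum_range (fun i ↦ i), Finset.sum_range_id, Nat.choose_two_right]

theorem frobeniusDet_eq_zero_of_sum_lt {s : Fin n → ℕ} (h : ∑ l, s l < n.choose 2) :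
    frobeniusDet s = 0 := by
  rw [frobeniusDet, det_apply]
  refine Finset.sum_eq_zero fun σ _ ↦ ?_
  have sum_lt : ∑ i, s (σ i) < ∑ i : Fin n, (i : ℕ) := by
    rwa [Equiv.sum_comp σ s, sum_fin_val_eq_choose_two]
  obtain ⟨i, -, hi⟩ := Finset.exists_lt_of_sum_lt sum_lt
  rw [Finset.prod_eq_zero (Finset.mem_univ i) (invFactorialSub_of_lt hi), smul_zero]

theorem det_pow_sub_mul_invFactorialSub (x : ℝ) (s : Fin n → ℕ) :
    (of fun l i : Fin n ↦ x ^ (s l - i) * invFactorialSub (s l) i).det =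
      x ^ (∑ l, s l - n.choose 2) * frobeniusDet s := by
  rw [frobeniusDet, det_apply', det_apply', Finset.mul_sum]
  refine Finset.sum_congr rfl fun σ _ ↦ ?_
  rw [mul_left_comm]
  congr 1
  simp only [of_apply, frobeniusMatrix]
  by_cases h : ∀ i : Fin n, (i : ℕ) ≤ s (σ i)
  · rw [Finset.prod_mul_distrib, Finset.prod_pow_eq_pow_sum,
      Finset.sum_tsub_distrib _ fun i _ ↦ h i, Equiv.sum_comp σ s, sum_fin_val_eq_choose_two]
  · push Not at h
    obtain ⟨i, hi⟩ := h
    have entry_eq_zero := invFactorialSub_of_lt hi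
    rw [Finset.prod_eq_zero (Finset.mem_univ i) (by rw [entry_eq_zero, mul_zero]),
      Finset.prod_eq_zero (Finset.mem_univ i) entry_eq_zero, mul_zero]

theorem prod_factorial_mul_frobeniusDet (s : Fin n → ℕ) :
    (∏ l, ((s l)! : ℝ)) * frobeniusDet s = (vandermonde fun l ↦ (s l : ℝ)).det := by
  rw [det_eval_matrixOfPolynomials_eq_det_vandermonde _ (fun i ↦ descPochhammer ℝ i)
      (fun i ↦ descPochhammer_natDegree ℝ i) (fun i ↦ monic_descPochhammer ℝ i), frobeniusDet,
    ← det_mul_column]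
  congr 1
  ext l i
  exact factorial_mul_invFactorialSub (s l) i

theorem prod_succ_mul_frobeniusDet_add_one (s : Fin n → ℕ) :
    (∏ l, ((s l : ℝ) + 1)) * frobeniusDet (s + 1) = frobeniusDet s := by
  have prod_factorial_ne_zero : ∏ l, ((s l)! : ℝ) ≠ 0 := by positivity
  refine mul_left_cancel₀ prod_factorial_ne_zero ?_
  have shifted := prod_factorial_mul_frobeniusDet (s + 1)
  simp only [Pi.add_apply, Pi.one_apply, Nat.factorial_succ, Nat.cast_mul, Nat.cast_add,
    Nat.cast_one, Finset.prod_mul_distrib, det_vandermonde_add (fun l ↦ (s l : ℝ)) 1,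
    ← prod_factorial_mul_frobeniusDet s] at shifted
  linear_combination shifted

theorem frobeniusDet_eq_zero_of_forall_ne_zero {s : Fin n → ℕ} (hs : ∀ l, s l ≠ 0)
    (hsum : ∑ l, s l < n.choose 2 + n) : frobeniusDet s = 0 := by
  obtain ⟨t, rfl⟩ : ∃ t : Fin n → ℕ, s = t + 1 :=
    ⟨fun l ↦ s l - 1, funext fun l ↦ (Nat.succ_pred (hs l)).symm⟩
  have sum_lt : ∑ l, t l < n.choose 2 := by
    simpa [Finset.sum_add_distrib] using hsum
  have prod_ne_zero : ∏ l, ((t l : ℝ) + 1) ≠ 0 := by positivity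
  have h := prod_succ_mul_frobeniusDet_add_one t
  rw [frobeniusDet_eq_zero_of_sum_lt sum_lt] at h
  exact (mul_eq_zero.1 h).resolve_left prod_ne_zero

theorem sum_frobeniusDet_sub_single (s : Fin n → ℕ) :
    ∑ l with s l ≠ 0, frobeniusDet (s - Pi.single l 1) =
      (∑ l, (s l : ℝ) - n.choose 2) * frobeniusDet s := by
  have term (l : Fin n) : (if s l ≠ 0 then frobeniusDet (s - Pi.single l 1) else 0) =
      ((frobeniusMatrix s).updateRow l fun i ↦
        ((s l : ℝ) - (i : ℕ)) * frobeniusMatrix s l i).det := by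
    split_ifs with h
    · obtain ⟨k, hk⟩ := Nat.exists_eq_succ_of_ne_zero h
      rw [frobeniusDet, frobeniusMatrix_eq_updateRow (s := s) (l := l) fun m hm ↦ by simp [hm]]
      congr 2
      ext i
      simpa [frobeniusMatrix, hk] using (sub_mul_invFactorialSub_succ k i).symm
    · refine (det_eq_zero_of_row_eq_zero l fun i ↦ ?_).symm
      rw [not_not] at h
      rcases Nat.eq_zero_or_pos (i : ℕ) with hi | hi
      · simp [h, hi]
      · simp [frobeniusMatrix, h, invFactorialSub_of_lt hi]
  rw [Finset.sum_filter, Finset.sum_congr rfl fun l _ ↦ term l, sum_det_updateRow_sub_mul,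
    ← sum_fin_val_eq_choose_two, Nat.cast_sum, frobeniusDet]

theorem sum_frobeniusDet_add_single_eq_det_updateCol (s : Fin (n + 1) → ℕ) :
    ∑ l, frobeniusDet (s + Pi.single l 1) =
      ((frobeniusMatrix s).updateCol 0 fun l ↦ invFactorialSub (s l + 1) 0).det := by
  have term (l : Fin (n + 1)) : frobeniusDet (s + Pi.single l 1) =
      ((frobeniusMatrix s).updateRow l fun i ↦ invFactorialSub (s l + 1) i).det := by
    rw [frobeniusDet, frobeniusMatrix_eq_updateRow (s := s) (l := l) fun m hm ↦ by simp [hm]]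
    simp
  have repeated_col (i : Fin n) :
      ((frobeniusMatrix s).updateCol i.succ fun l ↦ invFactorialSub (s l + 1) i.succ).det = 0 := by
    refine det_zero_of_column_eq (i := i.succ) (j := i.castSucc) Fin.castSucc_lt_succ.ne' fun l ↦ ?_
    rw [updateCol_self, updateCol_ne Fin.castSucc_lt_succ.ne]
    exact invFactorialSub_succ_succ (s l) i
  simp_rw [term]
  rw [sum_det_updateRow_eq_sum_det_updateCol (frobeniusMatrix s)
      (fun l i ↦ invFactorialSub (s l + 1) i), Fin.sum_univ_succ,
    Finset.sum_eq_zero fun i _ ↦ repeated_col i, add_zero, Fin.val_zero]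

theorem prod_succ_mul_det_updateCol_sub (s : Fin (n + 1) → ℕ) :
    (∏ l, ((s l : ℝ) + 1)) * ((frobeniusMatrix s).updateCol 0 fun l ↦
        invFactorialSub (s l) 0 - invFactorialSub (s l + 1) 0).det =
      (∏ l, (s l : ℝ)) * frobeniusDet s := by
  have prod_factorial_ne_zero : ∏ l, ((s l)! : ℝ) ≠ 0 := by positivity
  refine mul_left_cancel₀ prod_factorial_ne_zero ?_
  rw [mul_left_comm _ (∏ l, (s l : ℝ)), prod_factorial_mul_frobeniusDet, prod_mul_det_vandermonde,
    ← mul_assoc, ← Finset.prod_mul_distrib, ← det_mul_column]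
  congr 1
  ext l i
  refine Fin.cases ?_ (fun i ↦ ?_) i
  · simp only [of_apply, updateCol_self, Fin.cons_zero, invFactorialSub, Nat.zero_le, if_true,
      Nat.sub_zero, Nat.factorial_succ]
    push_cast
    field_simp
    ring
  · simp only [of_apply, updateCol_ne (Fin.succ_ne_zero i), Fin.cons_succ, frobeniusMatrix,
      Fin.val_succ, ← factorial_mul_invFactorialSub]
    ring

theorem sum_frobeniusDet_add_single (s : Fin n → ℕ) :
    ∑ l, frobeniusDet (s + Pi.single l 1) =
      frobeniusDet s * (1 - ∏ l, (s l : ℝ) / (s l + 1)) := by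
  cases n with
  | zero => simp
  | succ n =>
    have prod_ne_zero : ∏ l, ((s l : ℝ) + 1) ≠ 0 := by positivity
    have split_col : ((frobeniusMatrix s).updateCol 0 fun l ↦
        invFactorialSub (s l) 0 - invFactorialSub (s l + 1) 0).det =
        frobeniusDet s - ∑ l, frobeniusDet (s + Pi.single l 1) := by
      have col_eq : (fun l ↦ invFactorialSub (s l) 0 - invFactorialSub (s l + 1) 0) =
          (fun l ↦ frobeniusMatrix s l 0) + (-1 : ℝ) • fun l ↦ invFactorialSub (s l + 1) 0 := by
        ext l
        simp [frobeniusMatrix, sub_eq_add_neg]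
      rw [col_eq, det_updateCol_add, det_updateCol_smul, updateCol_eq_self, frobeniusDet,
        sum_frobeniusDet_add_single_eq_det_updateCol]
      ring
    have h := prod_succ_mul_det_updateCol_sub s
    rw [split_col] at h
    rw [Finset.prod_div_distrib]
    field_simp
    linear_combination -h

end Frobenius

section Plancherel

variable {n : ℕ}

/-- The sum of `(f^λ / N!) ^ 2` over the partitions `λ` of `N` into at most `n` parts, where `f^λ`
counts standard Young tableaux. Each `λ` is represented by the `n!` orderings of its shifted parts
`λ_i + n - 1 - i`; tuples with a repeated entry contribute zero. -/
noncomputable def plancherelCoeff (n N : ℕ) : ℝ :=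
  (n ! : ℝ)⁻¹ * ∑ s ∈ (Finset.univ : Finset (Fin n)).piAntidiag (N + n.choose 2),
    frobeniusDet s ^ 2

theorem plancherelCoeff_nonneg (n N : ℕ) : 0 ≤ plancherelCoeff n N := by
  unfold plancherelCoeff
  positivity

theorem succ_mul_plancherelCoeff_succ (n N : ℕ) :
    (N + 1) * plancherelCoeff n (N + 1) =
      (n ! : ℝ)⁻¹ * ∑ s ∈ (Finset.univ : Finset (Fin n)).piAntidiag (N + n.choose 2),
        frobeniusDet s ^ 2 * (1 - ∏ l, (s l : ℝ) / (s l + 1)) := by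
  have remove_box : ∀ s ∈ (Finset.univ : Finset (Fin n)).piAntidiag (N + n.choose 2 + 1),
      ((N : ℝ) + 1) * frobeniusDet s ^ 2 =
        ∑ l with s l ≠ 0, frobeniusDet s * frobeniusDet (s - Pi.single l 1) := by
    intro s hs
    have sum_eq : ∑ l, (s l : ℝ) = N + n.choose 2 + 1 := by
      exact_mod_cast (Finset.mem_piAntidiag.1 hs).1
    rw [← Finset.mul_sum, sum_frobeniusDet_sub_single, sum_eq]
    ring
  rw [plancherelCoeff, mul_left_comm, Finset.mul_sum, add_right_comm N 1,
    Finset.sum_congr rfl remove_box]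
  congr 1
  calc ∑ s ∈ Finset.univ.piAntidiag (N + n.choose 2 + 1),
        ∑ l with s l ≠ 0, frobeniusDet s * frobeniusDet (s - Pi.single l 1)
      = ∑ l : Fin n, ∑ s ∈ Finset.univ.piAntidiag (N + n.choose 2 + 1) with s l ≠ 0,
          frobeniusDet s * frobeniusDet (s - Pi.single l 1) := by
        simp_rw [Finset.sum_filter]
        exact Finset.sum_comm
    _ = ∑ l : Fin n, ∑ s ∈ Finset.univ.piAntidiag (N + n.choose 2),
          frobeniusDet (s + Pi.single l 1) * frobeniusDet s := by
        simp_rw [sum_piAntidiag_succ_filter, add_tsub_cancel_right]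
    _ = _ := by
        rw [Finset.sum_comm]
        refine Finset.sum_congr rfl fun s _ ↦ ?_
        rw [← Finset.sum_mul, sum_frobeniusDet_add_single]
        ring

theorem succ_mul_plancherelCoeff_succ_le (n N : ℕ) :
    (N + 1) * plancherelCoeff n (N + 1) ≤ plancherelCoeff n N := by
  rw [succ_mul_plancherelCoeff_succ, plancherelCoeff]
  gcongr with s
  refine mul_le_of_le_one_right (sq_nonneg _) (sub_le_self _ ?_)
  positivity

theorem succ_mul_plancherelCoeff_succ_of_lt {N : ℕ} (hN : N < n) :
    (N + 1) * plancherelCoeff n (N + 1) = plancherelCoeff n N := by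
  rw [succ_mul_plancherelCoeff_succ, plancherelCoeff]
  congr 1
  refine Finset.sum_congr rfl fun s hs ↦ ?_
  by_cases hzero : ∃ l, s l = 0
  · obtain ⟨l, hl⟩ := hzero
    rw [Finset.prod_eq_zero (Finset.mem_univ l) (by simp [hl]), sub_zero, mul_one]
  · have sum_lt : ∑ l, s l < n.choose 2 + n := by
      rw [(Finset.mem_piAntidiag.1 hs).1]
      omega
    rw [frobeniusDet_eq_zero_of_forall_ne_zero (not_exists.1 hzero) sum_lt]
    ring

/-- The coefficient of `z ^ k` in the power series of `z ^ i * e ^ (x * z)`. -/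
noncomputable def expCoeff (x : ℝ) (i k : ℕ) : ℝ :=
  x ^ (k - i) * invFactorialSub k i

theorem hasSum_plancherelCoeff_mul_pow {x : ℝ} {M : Matrix (Fin n) (Fin n) ℝ}
    (hM : ∀ i j : Fin n, HasSum (fun k ↦ expCoeff x i k * expCoeff x j k) (M i j)) :
    HasSum (fun N ↦ plancherelCoeff n N * (x ^ 2) ^ N) M.det := by
  have hasSum_tuples :
      HasSum (fun s : Fin n → ℕ ↦ (x ^ 2) ^ (∑ l, s l - n.choose 2) * frobeniusDet s ^ 2)
        (n ! * M.det) := by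
    convert hasSum_det_sq hM using 2 with s
    · simp only [expCoeff]
      rw [det_pow_sub_mul_invFactorialSub, mul_pow, pow_right_comm]
    · rw [Fintype.card_fin]
  have hasSum_levels := hasSum_sum_piAntidiag hasSum_tuples
  rw [← hasSum_nat_add_iff' (n.choose 2), Finset.sum_eq_zero, sub_zero] at hasSum_levels
  · have scaled := hasSum_levels.mul_left (n ! : ℝ)⁻¹
    rw [inv_mul_cancel_left₀ (by positivity)] at scaled
    suffices level : ∀ N, plancherelCoeff n N * (x ^ 2) ^ N =
        (n ! : ℝ)⁻¹ * ∑ s ∈ Finset.univ.piAntidiag (N + n.choose 2),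
          (x ^ 2) ^ (∑ l, s l - n.choose 2) * frobeniusDet s ^ 2 by
      simpa only [level] using scaled
    intro N
    rw [plancherelCoeff, mul_assoc, Finset.sum_mul]
    congr 1
    refine Finset.sum_congr rfl fun s hs ↦ ?_
    rw [(Finset.mem_piAntidiag.1 hs).1, Nat.add_sub_cancel, mul_comm]
  · refine fun m hm ↦ Finset.sum_eq_zero fun s hs ↦ ?_
    rw [frobeniusDet_eq_zero_of_sum_lt]
    · simp
    · rw [(Finset.mem_piAntidiag.1 hs).1]
      exact Finset.mem_range.1 hm

theorem expCoeff_zero (i k : ℕ) : expCoeff 0 i k = if k = i then 1 else 0 := by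
  rcases lt_trichotomy k i with h | rfl | h
  · simp [expCoeff, invFactorialSub_of_lt h, h.ne]
  · simp [expCoeff, invFactorialSub]
  · simp [expCoeff, Nat.sub_ne_zero_of_lt h, h.ne']

theorem plancherelCoeff_zero (n : ℕ) : plancherelCoeff n 0 = 1 := by
  have hasSum_entry (i j : Fin n) : HasSum (fun k ↦ expCoeff 0 i k * expCoeff 0 j k)
      ((1 : Matrix (Fin n) (Fin n) ℝ) i j) := by
    convert hasSum_ite_eq (i : ℕ) ((1 : Matrix (Fin n) (Fin n) ℝ) i j) using 2 with k
    simp only [expCoeff_zero, one_apply, Fin.ext_iff]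
    split_ifs <;> simp_all
  have h := hasSum_plancherelCoeff_mul_pow hasSum_entry
  rw [det_one] at h
  have single := hasSum_single (f := fun N ↦ plancherelCoeff n N * ((0 : ℝ) ^ 2) ^ N) 0
    fun N hN ↦ by simp [hN]
  simpa using single.unique h

theorem plancherelCoeff_le (n N : ℕ) : plancherelCoeff n N ≤ (N ! : ℝ)⁻¹ := by
  induction N with
  | zero => simp [plancherelCoeff_zero]
  | succ N ih =>
    have h := (succ_mul_plancherelCoeff_succ_le n N).trans ih
    rw [Nat.factorial_succ, Nat.cast_mul, mul_inv, ← div_eq_inv_mul, le_div_iff₀' (by positivity)]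
    exact_mod_cast h

theorem plancherelCoeff_of_le {N : ℕ} (hN : N ≤ n) : plancherelCoeff n N = (N ! : ℝ)⁻¹ := by
  induction N with
  | zero => simp [plancherelCoeff_zero]
  | succ N ih =>
    have h := (succ_mul_plancherelCoeff_succ_of_lt hN).trans (ih (Nat.le_of_succ_le hN))
    rw [Nat.factorial_succ, Nat.cast_mul, mul_inv, ← div_eq_inv_mul, eq_div_iff (by positivity),
      mul_comm]
    exact_mod_cast h

end Plancherel

section Fourier

theorem integral_exp_intCast_mul_I (m : ℤ) :
    ∫ θ in 0..2 * π, Complex.exp (m * (θ * Complex.I)) = if m = 0 then 2 * (π : ℂ) else 0 := by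
  split_ifs with hm
  · simp [hm]
  · have coeff_ne_zero : (m : ℂ) * Complex.I ≠ 0 := by simp [hm]
    have h := integral_exp_mul_complex (a := 0) (b := 2 * π) coeff_ne_zero
    have period : Complex.exp (m * Complex.I * (2 * π : ℝ)) = 1 := by
      rw [← Complex.exp_int_mul_two_pi_mul_I m]
      push_cast
      ring_nf
    rw [period, Complex.ofReal_zero, mul_zero, Complex.exp_zero, sub_self, zero_div] at h
    rw [← h]
    simp only [mul_assoc, mul_comm Complex.I]

theorem integral_exp_pow_mul_exp_neg_pow (k m : ℕ) :
    ∫ θ in 0..2 * π, Complex.exp (θ * Complex.I) ^ k * Complex.exp (-(θ * Complex.I)) ^ m =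
      if k = m then 2 * (π : ℂ) else 0 := by
  have integrand_eq (θ : ℝ) :
      Complex.exp (θ * Complex.I) ^ k * Complex.exp (-(θ * Complex.I)) ^ m =
        Complex.exp (((k - m : ℤ) : ℂ) * (θ * Complex.I)) := by
    rw [← Complex.exp_nat_mul, ← Complex.exp_nat_mul, ← Complex.exp_add]
    push_cast
    ring_nf
  simp_rw [integrand_eq, integral_exp_intCast_mul_I, sub_eq_zero, Nat.cast_inj]

variable {a b : ℕ → ℂ} {f g : ℝ → ℂ}

theorem hasSum_mul_mul_integral_exp_pow_mul_exp_neg_pow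
    (hf : ∀ θ : ℝ, HasSum (fun k ↦ a k * Complex.exp (θ * Complex.I) ^ k) (f θ))
    (hg : ∀ θ : ℝ, HasSum (fun k ↦ b k * Complex.exp (-(θ * Complex.I)) ^ k) (g θ)) :
    HasSum (fun p : ℕ × ℕ ↦ a p.1 * b p.2 * ∫ θ in 0..2 * π,
      Complex.exp (θ * Complex.I) ^ p.1 * Complex.exp (-(θ * Complex.I)) ^ p.2)
      (∫ θ in 0..2 * π, f θ * g θ) := by
  have norm_exp_neg (θ : ℝ) : ‖Complex.exp (-(θ * Complex.I))‖ = 1 := by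
    simpa using Complex.norm_exp_ofReal_mul_I (-θ)
  have ha : Summable fun k ↦ ‖a k‖ := by simpa using (hf 0).summable.norm
  have hb : Summable fun k ↦ ‖b k‖ := by simpa using (hg 0).summable.norm
  simp_rw [← intervalIntegral.integral_const_mul]
  refine intervalIntegral.hasSum_integral_of_dominated_convergence
    (fun p _ ↦ ‖a p.1 * b p.2‖) (fun p ↦ ?_) (fun p ↦ ?_) ?_ ?_ ?_
  · exact Continuous.aestronglyMeasurable (by fun_prop)
  · refine .of_forall fun θ _ ↦ le_of_eq ?_
    simp [Complex.norm_exp_ofReal_mul_I, norm_exp_neg]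
  · exact .of_forall fun θ _ ↦ ha.mul_norm hb
  · exact intervalIntegrable_const
  · refine .of_forall fun θ _ ↦ ?_
    have summable_pairs := summable_mul_of_summable_norm (hf θ).summable.norm (hg θ).summable.norm
    simpa only [mul_mul_mul_comm (a _) (b _)] using (hf θ).mul (hg θ) summable_pairs

theorem hasSum_mul_of_hasSum_mul_exp_pow
    (hf : ∀ θ : ℝ, HasSum (fun k ↦ a k * Complex.exp (θ * Complex.I) ^ k) (f θ))
    (hg : ∀ θ : ℝ, HasSum (fun k ↦ b k * Complex.exp (-(θ * Complex.I)) ^ k) (g θ)) :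
    HasSum (fun k ↦ a k * b k) ((2 * π : ℂ)⁻¹ * ∫ θ in 0..2 * π, f θ * g θ) := by
  have hasSum_pairs := hasSum_mul_mul_integral_exp_pow_mul_exp_neg_pow hf hg
  have diag_injective : Function.Injective fun k : ℕ ↦ (k, k) := fun k m h ↦ (Prod.ext_iff.1 h).1
  rw [← diag_injective.hasSum_iff] at hasSum_pairs
  · have two_pi_ne_zero : (2 * π : ℂ) ≠ 0 := by simp [pi_ne_zero]
    have scaled := hasSum_pairs.mul_left (2 * π : ℂ)⁻¹
    simpa only [Function.comp_def, integral_exp_pow_mul_exp_neg_pow, if_true,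
      mul_comm (2 * π : ℂ)⁻¹, mul_inv_cancel_right₀ two_pi_ne_zero] using scaled
  · intro p hp
    rw [integral_exp_pow_mul_exp_neg_pow, if_neg fun h ↦ hp ⟨p.1, Prod.ext rfl h⟩, mul_zero]

end Fourier

section Bessel

theorem hasSum_expCoeff_mul_pow (x : ℝ) (i : ℕ) (z : ℂ) :
    HasSum (fun k ↦ (expCoeff x i k : ℂ) * z ^ k) (Complex.exp (x * z) * z ^ i) := by
  have hasSum_exp := (NormedSpace.expSeries_div_hasSum_exp (x * z : ℂ)).mul_right (z ^ i)
  rw [← Complex.exp_eq_exp_ℂ] at hasSum_exp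
  rw [← hasSum_nat_add_iff' i, Finset.sum_eq_zero, sub_zero]
  · have shifted (k : ℕ) :
        (expCoeff x i (k + i) : ℂ) * z ^ (k + i) = (x * z) ^ k / (k ! : ℂ) * z ^ i := by
      simp only [expCoeff, invFactorialSub, Nat.le_add_left, if_true, Nat.add_sub_cancel]
      push_cast
      ring
    simpa only [shifted] using hasSum_exp
  · intro k hk
    simp [expCoeff, invFactorialSub_of_lt (Finset.mem_range.1 hk)]

theorem ofReal_besselI (ν : ℤ) (T : ℝ) :
    (besselI ν T : ℂ) = (2 * π : ℂ)⁻¹ *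
      ∫ θ in 0..2 * π, Complex.exp (T * Complex.cos θ) * Complex.exp (ν * (θ * Complex.I)) := by
  let f (θ : ℝ) : ℂ := Complex.exp (T * Complex.cos θ) * Complex.exp (ν * (θ * Complex.I))
  have f_continuous : Continuous f := by fun_prop
  have reflect : ∫ θ in π..2 * π, f θ = ∫ θ in 0..π, f (2 * π - θ) := by
    rw [intervalIntegral.integral_comp_sub_left]
    ring_nf
  have f_add_f (θ : ℝ) :
      f θ + f (2 * π - θ) = 2 * ((Real.exp (T * Real.cos θ) * Real.cos (ν * θ) : ℝ) : ℂ) := by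
    have exp_reflect : Complex.exp (ν * ((2 * π - θ : ℝ) * Complex.I)) =
        Complex.exp (-(ν * θ) * Complex.I) := by
      rw [← mul_one (Complex.exp (-(ν * θ) * Complex.I)), ← Complex.exp_int_mul_two_pi_mul_I ν,
        ← Complex.exp_add]
      push_cast
      ring_nf
    have cos_reflect : Complex.cos (2 * π - θ : ℝ) = Complex.cos θ := by
      rw [← Complex.ofReal_cos, Real.cos_two_pi_sub, Complex.ofReal_cos]
    simp only [f, exp_reflect, cos_reflect]
    push_cast
    rw [← mul_assoc (ν : ℂ)]
    linear_combination -Complex.exp (T * Complex.cos θ) * Complex.two_cos (ν * θ)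
  have integral_f : ∫ θ in 0..2 * π, f θ =
      2 * ((∫ θ in 0..π, Real.exp (T * Real.cos θ) * Real.cos (ν * θ) : ℝ) : ℂ) := by
    rw [← intervalIntegral.integral_add_adjacent_intervals (f_continuous.intervalIntegrable 0 π)
      (f_continuous.intervalIntegrable π (2 * π)), reflect, ← intervalIntegral.integral_add
        (f_continuous.intervalIntegrable 0 π)
        (Continuous.intervalIntegrable (by fun_prop) 0 π)]
    simp_rw [f_add_f]
    rw [intervalIntegral.integral_const_mul, intervalIntegral.integral_ofReal]
  change _ = (2 * π : ℂ)⁻¹ * ∫ θ in 0..2 * π, f θ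
  rw [integral_f, besselI]
  push_cast
  ring

theorem hasSum_expCoeff_mul_expCoeff (x : ℝ) (i j : ℕ) :
    HasSum (fun k ↦ expCoeff x i k * expCoeff x j k) (besselI (i - j) (2 * x)) := by
  rw [← Complex.hasSum_ofReal, ofReal_besselI]
  have parseval := hasSum_mul_of_hasSum_mul_exp_pow
    (fun θ : ℝ ↦ hasSum_expCoeff_mul_pow x i (Complex.exp (θ * Complex.I)))
    fun θ : ℝ ↦ hasSum_expCoeff_mul_pow x j (Complex.exp (-(θ * Complex.I)))
  have integrand_eq (θ : ℝ) :
      Complex.exp (x * Complex.exp (θ * Complex.I)) * Complex.exp (θ * Complex.I) ^ i *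
        (Complex.exp (x * Complex.exp (-(θ * Complex.I))) * Complex.exp (-(θ * Complex.I)) ^ j) =
      Complex.exp ((2 * x : ℝ) * Complex.cos θ) *
        Complex.exp (((i - j : ℤ) : ℂ) * (θ * Complex.I)) := by
    simp only [← Complex.exp_nat_mul, ← Complex.exp_add]
    congr 1
    push_cast
    rw [← neg_mul]
    linear_combination -(x : ℂ) * Complex.two_cos θ
  simpa only [integrand_eq, Complex.ofReal_mul] using parseval

end Bessel

end BesselToeplitz

open BesselToeplitz in
theorem szego_bessel_toeplitz_asymptotics_general (T : ℝ) {c : ℝ} (hc : 0 ≤ c) (n : ℕ) :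
    |(of fun j k : Fin n ↦ besselI ((j : ℤ) - (k : ℤ)) T).det - Real.exp (T ^ 2 / 4)| ≤
      Real.exp (T ^ 2 / 4 * Real.exp c) * Real.exp (-c * n) := by
  have expansion := hasSum_plancherelCoeff_mul_pow (x := T / 2)
    (M := of fun j k : Fin n ↦ besselI ((j : ℤ) - (k : ℤ)) T) fun j k ↦ by
      simpa [mul_div_cancel₀] using hasSum_expCoeff_mul_expCoeff (T / 2) j k
  rw [show (T / 2) ^ 2 = T ^ 2 / 4 by ring] at expansion
  exact abs_sub_exp_le_of_hasSum (plancherelCoeff_nonneg n) (plancherelCoeff_le n)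
    (fun N ↦ plancherelCoeff_of_le) (by positivity) hc expansion

/-- The strong Szegő limit theorem for the symbol `e^{(T/2)(z + 1/z)}`: the `n × n` Toeplitz
determinant of modified Bessel functions converges to `e^{T²/4}` with an error `O(e^{-cn})`
for every `c > 0`. -/
theorem szego_bessel_toeplitz_asymptotics (T : ℝ) (hT : 0 < T) :
    ∀ c > (0:ℝ), ∃ C > (0:ℝ), ∀ n : ℕ,
      |Matrix.det (Matrix.of fun j k : Fin n => besselI ((j : ℤ) - (k : ℤ)) T) -
        Real.exp (T ^ 2 / 4)| ≤ C * Real.exp (-c * n) := by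
  intro c hc
  exact ⟨_, Real.exp_pos _, szego_bessel_toeplitz_asymptotics_general T hc.le⟩
end
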